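/- arXiv:2401.12339 — 3 statements merged into one kernel-verified Lean document; each statement's English description precedes it below -/
import Mathlib

section
/- If G is a crown-free (C_{13}-free) linear 3-uniform hypergraph on n vertices and s is the number of vertices of G with degree at least 6, then the number of edges of G is at most 3(n - s)/2. -/
/-!
The proof is a discharging argument. Give every vertex of degree at most 5 one unit of charge, to
be divided among the edges through it; it suffices that every edge receives at least `2/3`. Equal
division achieves this, except on the *heavy* edges `{a, b, c}`, whose degrees are 5, 5 and 4 or 5,
and on edges with a vertex of degree at least 6. On an edge of the latter kind either the other two
degrees are at most 3, or crown-freeness forces one of them to be 1.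

Around a heavy edge, the links of `a`, `b` and `c` (with the edge itself left out) are matchings of
sizes 4, 4 and at least 3, and crown-freeness says that no three disjoint pairs come one from each
link. This forces the links of `a` and `b`, with any three pairs from the link of `c`, to form two
disjoint copies of `K₄` properly coloured by `a`, `b`, `c`, with one pair of colour `c` missing. An
edge through one of these eight vertices that avoided `{a, b, c}` would complete a crown, so they
all have degree at most 3. Hence the neighbours of a heavy edge collect `2/3` from their two
vertices outside it, and the heavy edge may keep the whole charge of its own vertices.
-/

open Finset

/-- A linear `r`-uniform hypergraph: every edge has `r` vertices and
any two distinct edges intersect in at most one vertex. -/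
def IsLinear {V : Type*} [DecidableEq V] (r : ℕ) (E : Finset (Finset V)) : Prop :=
  (∀ e ∈ E, e.card = r) ∧ ∀ e ∈ E, ∀ f ∈ E, e ≠ f → (e ∩ f).card ≤ 1

/-- The degree of a vertex: the number of edges containing it. -/
def degree {V : Type*} [DecidableEq V] (E : Finset (Finset V)) (v : V) : ℕ :=
  (E.filter (fun e => v ∈ e)).card

/-- `E` contains a copy of the `r`-crown `C_{1r}`: `r` pairwise disjoint edges
together with one edge meeting each of them in exactly one vertex. -/
def HasCrown {V : Type*} [DecidableEq V] (r : ℕ) (E : Finset (Finset V)) : Prop :=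
  ∃ e ∈ E, ∃ f : Fin r → Finset V,
    (∀ i, f i ∈ E) ∧ (∀ i, f i ≠ e) ∧
    (∀ i j, i ≠ j → f i ∩ f j = ∅) ∧
    (∀ i, (e ∩ f i).card = 1)

/-- `E` contains a copy of `C*`: `r-2` edges pairwise meeting exactly in a common
vertex `v`, two further edges disjoint from each other and from all the others,
and one edge meeting each of the `r` edges in exactly one vertex, avoiding `v`. -/
def HasCStar {V : Type*} [DecidableEq V] (r : ℕ) (E : Finset (Finset V)) : Prop :=
  ∃ v : V, ∃ e ∈ E, ∃ f : Fin r → Finset V,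
    (∀ i, f i ∈ E) ∧ (∀ i, f i ≠ e) ∧
    (∀ i : Fin r, (i : ℕ) < r - 2 → v ∈ f i) ∧
    (∀ i j : Fin r, (i : ℕ) < r - 2 → (j : ℕ) < r - 2 → i ≠ j → f i ∩ f j = {v}) ∧
    (∀ i j : Fin r, r - 2 ≤ (i : ℕ) → i ≠ j → f i ∩ f j = ∅) ∧
    (∀ i, (e ∩ f i).card = 1) ∧ v ∉ e

section Matching

variable {V : Type*} {A B C : Finset (Finset V)}

/-- A matching, that is, a family of pairwise disjoint two-element sets; the edges of a linear
3-graph through a vertex `x` form one when `x` is removed from them. -/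
structure IsMatching (M : Finset (Finset V)) : Prop where
  sized : (M : Set (Finset V)).Sized 2
  pairwiseDisjoint : (M : Set (Finset V)).PairwiseDisjoint id

/-- Three families, thought of as colour classes, are rainbow-free if no three pairwise disjoint
sets have one member in each of them. -/
def IsRainbowFree (A B C : Finset (Finset V)) : Prop :=
  ∀ f ∈ A, ∀ g ∈ B, ∀ h ∈ C, Disjoint f g → Disjoint f h → ¬ Disjoint g h

theorem IsMatching.mono {M N : Finset (Finset V)} (hN : IsMatching N) (h : M ⊆ N) :
    IsMatching M :=
  ⟨hN.sized.mono (coe_subset.2 h), hN.pairwiseDisjoint.subset (coe_subset.2 h)⟩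

namespace IsRainbowFree

theorem swap (h : IsRainbowFree A B C) : IsRainbowFree B A C :=
  fun _ hg _ hf k hk hgf hgk hfk => h _ hf _ hg k hk hgf.symm hfk hgk

theorem mono_right {C' : Finset (Finset V)} (h : IsRainbowFree A B C) (hC : C' ⊆ C) :
    IsRainbowFree A B C' :=
  fun f hf g hg k hk => h f hf g hg k (hC hk)

end IsRainbowFree

variable [DecidableEq V]

/-- Two disjoint copies of `K₄`, drawn as `2 × 2` grids `v` and `w` in reading order. The rows
have colour `A`, the columns colour `B` and the diagonals colour `C`, except that the antidiagonal
`{v₁, v₂}` is absent. -/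
structure IsTwoGrids (A B C : Finset (Finset V)) (v₀ v₁ v₂ v₃ w₀ w₁ w₂ w₃ : V) : Prop where
  nodup : [v₀, v₁, v₂, v₃, w₀, w₁, w₂, w₃].Nodup
  rows : A = {{v₀, v₁}, {v₂, v₃}, {w₀, w₁}, {w₂, w₃}}
  columns : B = {{v₀, v₂}, {v₁, v₃}, {w₀, w₂}, {w₁, w₃}}
  diagonals : C = {{v₀, v₃}, {w₀, w₃}, {w₁, w₂}}

theorem card_le_card_inter_biUnion {M : Finset (Finset V)} {S : Finset V}
    (hM : (M : Set (Finset V)).PairwiseDisjoint id) (hS : ∀ f ∈ M, ¬ Disjoint f S) :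
    #M ≤ #(S ∩ M.biUnion id) := by
  rw [inter_biUnion, card_biUnion, card_eq_sum_ones]
  · refine sum_le_sum fun f hf => ?_
    rw [Nat.one_le_iff_ne_zero, Ne, card_eq_zero, ← disjoint_iff_inter_eq_empty, disjoint_comm]
    exact hS f hf
  · exact fun f hf g hg hfg => (hM hf hg hfg).mono inter_subset_right inter_subset_right

omit [DecidableEq V] in
theorem exists_disjoint_of_card_lt {M : Finset (Finset V)} {S : Finset V}
    (hM : (M : Set (Finset V)).PairwiseDisjoint id) (hS : #S < #M) : ∃ f ∈ M, Disjoint f S := by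
  classical
  by_contra! h
  have := (card_le_card_inter_biUnion hM h).trans (card_le_card inter_subset_left)
  lia

theorem two_mul_card_le_card_add_card_filter {M : Finset (Finset V)} {S : Finset V}
    (hM : (M : Set (Finset V)).PairwiseDisjoint id) (hS : ∀ f ∈ M, ¬ Disjoint f S) :
    2 * #M ≤ #S + #{f ∈ M | #(f ∩ S) = 1} := by
  have hsum : ∑ f ∈ M, #(f ∩ S) ≤ #S := by
    have hdisj : (M : Set (Finset V)).PairwiseDisjoint (· ∩ S) := fun f hf g hg hfg =>
      (hM hf hg hfg).mono inter_subset_left inter_subset_left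
    rw [← card_biUnion hdisj, ← biUnion_inter]
    exact card_le_card inter_subset_right
  have hterm : ∀ f ∈ M, 2 ≤ #(f ∩ S) + if #(f ∩ S) = 1 then 1 else 0 := by
    intro f hf
    have : 0 < #(f ∩ S) := card_pos.2 (not_disjoint_iff_nonempty_inter.1 (hS f hf))
    grind
  calc 2 * #M = ∑ f ∈ M, 2 := by simp [mul_comm]
    _ ≤ ∑ f ∈ M, (#(f ∩ S) + if #(f ∩ S) = 1 then 1 else 0) := sum_le_sum hterm
    _ ≤ #S + #{f ∈ M | #(f ∩ S) = 1} := by rw [sum_add_distrib, ← card_filter]; lia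

theorem eq_pair_of_mem {f : Finset V} {x y : V} (hf : #f = 2) (hx : x ∈ f) (hy : y ∈ f)
    (hxy : x ≠ y) : f = {x, y} :=
  (eq_of_subset_of_card_le (by grind) (by rw [hf, card_pair hxy])).symm

theorem exists_grid {f f' g g' : Finset V} (hf : #f = 2) (hf' : #f' = 2) (hg : #g = 2)
    (hg' : #g' = 2) (hff' : Disjoint f f') (hgg' : Disjoint g g') (hfg : ¬ Disjoint f g)
    (hfg' : ¬ Disjoint f g') (hf'g : ¬ Disjoint f' g) (hf'g' : ¬ Disjoint f' g') :
    ∃ p q r s, [p, q, r, s].Nodup ∧ f = {p, q} ∧ f' = {r, s} ∧ g = {p, r} ∧ g' = {q, s} := by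
  obtain ⟨p, hpf, hpg⟩ := not_disjoint_iff.1 hfg
  obtain ⟨q, hqf, hqg'⟩ := not_disjoint_iff.1 hfg'
  obtain ⟨r, hrf', hrg⟩ := not_disjoint_iff.1 hf'g
  obtain ⟨s, hsf', hsg'⟩ := not_disjoint_iff.1 hf'g'
  rw [disjoint_left] at hff' hgg'
  have hnodup : [p, q, r, s].Nodup := by
    simp only [List.nodup_cons, List.mem_cons, List.not_mem_nil, or_false]
    grind
  exact ⟨p, q, r, s, hnodup, eq_pair_of_mem hf hpf hqf (by grind),
    eq_pair_of_mem hf' hrf' hsf' (by grind), eq_pair_of_mem hg hpg hrg (by grind),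
    eq_pair_of_mem hg' hqg' hsg' (by grind)⟩

theorem eq_diagonal_of_not_disjoint {h : Finset V} {p q r s : V} (hh : #h = 2)
    (hnodup : [p, q, r, s].Nodup) (hpq : ¬ Disjoint h {p, q}) (hrs : ¬ Disjoint h {r, s})
    (hpr : ¬ Disjoint h {p, r}) (hqs : ¬ Disjoint h {q, s}) : h = {p, s} ∨ h = {q, r} := by
  obtain ⟨x, y, hxy, rfl⟩ := card_eq_two.1 hh
  simp only [disjoint_insert_left, disjoint_singleton_left, mem_insert, mem_singleton] at *
  grind

theorem mem_iff_notMem_of_card_pair_inter_eq_one {U : Finset V} {x y : V} (hxy : x ≠ y)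
    (h : #({x, y} ∩ U) = 1) : x ∈ U ↔ y ∉ U := by
  by_cases hx : x ∈ U <;> by_cases hy : y ∈ U <;>
    simp_all [insert_inter_of_mem, insert_inter_of_notMem, singleton_inter_of_mem,
      singleton_inter_of_notMem]

theorem exists_eq_insert_insert_pair {M : Finset (Finset V)} {e e' : Finset V}
    (hM : (M : Set (Finset V)).PairwiseDisjoint id) (hM4 : #M = 4) (he : e ∈ M) (he' : e' ∈ M)
    (hne : e ≠ e') :
    ∃ f f', Disjoint f f' ∧ Disjoint f (e ∪ e') ∧ Disjoint f' (e ∪ e') ∧ M = {e, e', f, f'} := by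
  obtain ⟨f, f', hff', hsdiff⟩ : ∃ f f', f ≠ f' ∧ M \ {e, e'} = {f, f'} := by
    rw [← card_eq_two, card_sdiff_of_subset (by grind), hM4, card_pair hne]
  have hdisj : ∀ k ∈ M \ {e, e'}, k ∈ M ∧ Disjoint k (e ∪ e') := by
    intro k hk
    simp only [mem_sdiff, mem_insert, mem_singleton, not_or] at hk
    rw [disjoint_union_right]
    exact ⟨hk.1, hM hk.1 he hk.2.1, hM hk.1 he' hk.2.2⟩
  obtain ⟨hf, hf_disj⟩ := hdisj f (by simp [hsdiff])
  obtain ⟨hf', hf'_disj⟩ := hdisj f' (by simp [hsdiff])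
  exact ⟨f, f', hM hf hf' hff', hf_disj, hf'_disj, by grind⟩

theorem IsMatching.card_biUnion {M : Finset (Finset V)} (hM : IsMatching M) :
    #(M.biUnion id) = 2 * #M := by
  rw [Finset.card_biUnion hM.pairwiseDisjoint, mul_comm]
  exact sum_const_nat fun _ hf => hM.sized hf

namespace IsRainbowFree

omit [DecidableEq V] in
theorem false_of_card_le (h : IsRainbowFree A B C) (hA : (A : Set (Finset V)).PairwiseDisjoint id)
    (hB : IsMatching B) (hC : (C : Set (Finset V)).Sized 2)
    (hA5 : 5 ≤ #A) (hB3 : 3 ≤ #B) (hC1 : C.Nonempty) : False := by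
  classical
  obtain ⟨k, hk⟩ := hC1
  obtain ⟨g, hg, hgk⟩ := exists_disjoint_of_card_lt hB.pairwiseDisjoint (S := k)
    (by rw [hC hk]; lia)
  have hgk_card : #(g ∪ k) ≤ 4 := (card_union_le g k).trans (by rw [hB.sized hg, hC hk])
  obtain ⟨f, hf, hfgk⟩ := exists_disjoint_of_card_lt hA (S := g ∪ k) (by lia)
  rw [disjoint_union_right] at hfgk
  exact h f hf g hg k hk hfgk.1 hfgk.2 hgk

theorem card_le_card_inter_add_card_inter (h : IsRainbowFree A B C)
    (hC : (C : Set (Finset V)).PairwiseDisjoint id) {f g : Finset V} (hf : f ∈ A) (hg : g ∈ B)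
    (hfg : Disjoint f g) : #C ≤ #(f ∩ C.biUnion id) + #(g ∩ C.biUnion id) := by
  have hmeet : ∀ k ∈ C, ¬ Disjoint k (f ∪ g) := by
    intro k hk hkfg
    rw [disjoint_union_right] at hkfg
    exact h f hf g hg k hk hfg hkfg.1.symm hkfg.2.symm
  refine (card_le_card_inter_biUnion hC hmeet).trans ?_
  rw [union_inter_distrib_right]
  exact card_union_le _ _

theorem not_disjoint_biUnion (h : IsRainbowFree A B C) (hA : (A : Set (Finset V)).Sized 2)
    (hB : IsMatching B) (hC : (C : Set (Finset V)).PairwiseDisjoint id) (hB3 : 3 ≤ #B)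
    (hC3 : 3 ≤ #C) {f : Finset V} (hf : f ∈ A) : ¬ Disjoint f (C.biUnion id) := by
  intro hfC
  obtain ⟨g, hg, hgf⟩ := exists_disjoint_of_card_lt hB.pairwiseDisjoint (S := f)
    (by rw [hA hf]; lia)
  have hle := h.card_le_card_inter_add_card_inter hC hf hg hgf.symm
  have hg2 : #(g ∩ C.biUnion id) ≤ 2 := hB.sized hg ▸ card_le_card inter_subset_left
  rw [disjoint_iff_inter_eq_empty.1 hfC, card_empty] at hle
  lia

theorem exists_ne_card_inter_eq_one (h : IsRainbowFree A B C) (hA : IsMatching A)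
    (hB : IsMatching B) (hC : IsMatching C) (hA4 : 4 ≤ #A) (hB3 : 3 ≤ #B) (hC3 : #C = 3) :
    ∃ f ∈ A, ∃ f' ∈ A, f ≠ f' ∧ #(f ∩ C.biUnion id) = 1 ∧ #(f' ∩ C.biUnion id) = 1 := by
  have hcount := two_mul_card_le_card_add_card_filter hA.pairwiseDisjoint fun f =>
    h.not_disjoint_biUnion hA.sized hB hC.pairwiseDisjoint hB3 hC3.ge
  rw [hC.card_biUnion] at hcount
  obtain ⟨f, hf, f', hf', hne⟩ : ∃ f ∈ {f ∈ A | #(f ∩ C.biUnion id) = 1},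
      ∃ f' ∈ {f ∈ A | #(f ∩ C.biUnion id) = 1}, f ≠ f' := one_lt_card.1 (by lia)
  rw [mem_filter] at hf hf'
  exact ⟨f, hf.1, f', hf'.1, hne, hf.2, hf'.2⟩

theorem exists_grid_diagonal_mem_biUnion (h : IsRainbowFree A B C) (hA : IsMatching A)
    (hB : IsMatching B) (hC : IsMatching C) (hA4 : 4 ≤ #A) (hB4 : 4 ≤ #B) (hC3 : #C = 3) :
    ∃ v₀ v₁ v₂ v₃, [v₀, v₁, v₂, v₃].Nodup ∧ {v₀, v₁} ∈ A ∧ {v₂, v₃} ∈ A ∧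
      {v₀, v₂} ∈ B ∧ {v₁, v₃} ∈ B ∧ v₀ ∈ C.biUnion id ∧ v₁ ∉ C.biUnion id ∧
      v₂ ∉ C.biUnion id := by
  obtain ⟨f, hf, f', hf', hff', hfC, hf'C⟩ :=
    h.exists_ne_card_inter_eq_one hA hB hC hA4 (by lia) hC3
  obtain ⟨g, hg, g', hg', hgg', hgC, hg'C⟩ :=
    h.swap.exists_ne_card_inter_eq_one hB hA hC hB4 (by lia) hC3
  have hcross : ∀ f ∈ A, ∀ g ∈ B, #(f ∩ C.biUnion id) = 1 → #(g ∩ C.biUnion id) = 1 →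
      ¬ Disjoint f g := by
    intro f hf g hg hfC hgC hfg
    have := h.card_le_card_inter_add_card_inter hC.pairwiseDisjoint hf hg hfg
    lia
  obtain ⟨p, q, r, s, hnodup, rfl, rfl, rfl, rfl⟩ := exists_grid (hA.sized hf) (hA.sized hf')
    (hB.sized hg) (hB.sized hg') (hA.pairwiseDisjoint hf hf' hff')
    (hB.pairwiseDisjoint hg hg' hgg') (hcross _ hf _ hg hfC hgC) (hcross _ hf _ hg' hfC hg'C)
    (hcross _ hf' _ hg hf'C hgC) (hcross _ hf' _ hg' hf'C hg'C)
  have hpq := mem_iff_notMem_of_card_pair_inter_eq_one (by grind) hfC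
  have hrs := mem_iff_notMem_of_card_pair_inter_eq_one (by grind) hf'C
  have hpr := mem_iff_notMem_of_card_pair_inter_eq_one (by grind) hgC
  by_cases hp : p ∈ C.biUnion id
  · exact ⟨p, q, r, s, hnodup, hf, hf', hg, hg', hp, by grind, by grind⟩
  · rw [pair_comm] at hf hf'
    have hperm : [q, p, s, r].Nodup := by
      simp only [List.nodup_cons, List.mem_cons, List.not_mem_nil, or_false] at hnodup ⊢
      grind
    exact ⟨q, p, s, r, hperm, hf, hf', hg', hg, by grind, hp, by grind⟩

theorem pair_mem_of_notMem_biUnion (h : IsRainbowFree A B C) (hC : (C : Set (Finset V)).Sized 2)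
    {g g' : Finset V} {x y z : V} (hf : {y, z} ∈ A) (hg : g ∈ B) (hg' : g' ∈ B)
    (hgg' : Disjoint g g') (hfg : Disjoint {y, z} g) (hfg' : Disjoint {y, z} g')
    (hx : x ∈ C.biUnion id) (hy : y ∉ C.biUnion id) (hxz : x ≠ z) (hxg : x ∉ g) (hxg' : x ∉ g') :
    {x, z} ∈ C := by
  obtain ⟨k, hk, hxk⟩ := mem_biUnion.1 hx
  suffices hzk : z ∈ k from eq_pair_of_mem (hC hk) hxk hzk hxz ▸ hk
  by_contra hzk
  have hyk : y ∉ k := fun hyk => hy (mem_biUnion.2 ⟨k, hk, hyk⟩)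
  have hfk : Disjoint {y, z} k := by simp [hyk, hzk]
  obtain ⟨s, hsg, hsk⟩ := not_disjoint_iff.1 (h _ hf g hg k hk hfg hfk)
  obtain ⟨t, htg', htk⟩ := not_disjoint_iff.1 (h _ hf g' hg' k hk hfg' hfk)
  have hst : s ≠ t := fun hst => disjoint_left.1 hgg' hsg (hst ▸ htg')
  have hthree : #{x, s, t} ≤ #k := card_le_card (by grind)
  rw [hC hk, card_eq_three.2 ⟨x, s, t, by grind, by grind, hst, rfl⟩] at hthree
  lia

theorem eq_diagonal_of_mem (h : IsRainbowFree A B C) (hC : (C : Set (Finset V)).Sized 2)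
    {v₀ v₁ v₂ w₀ w₁ w₂ w₃ : V} (hw : [w₀, w₁, w₂, w₃].Nodup)
    (hvw : Disjoint {v₀, v₁, v₂} ({w₀, w₁, w₂, w₃} : Finset V)) (hv_row : {v₀, v₁} ∈ A)
    (hw_row : {w₀, w₁} ∈ A) (hw_row' : {w₂, w₃} ∈ A) (hv_col : {v₀, v₂} ∈ B)
    (hw_col : {w₀, w₂} ∈ B) (hw_col' : {w₁, w₃} ∈ B) {k : Finset V} (hk : k ∈ C)
    (hkv : Disjoint k {v₀, v₁, v₂}) : k = {w₀, w₃} ∨ k = {w₁, w₂} := by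
  have hmeet_col : ∀ g ∈ B, g ⊆ {w₀, w₁, w₂, w₃} → ¬ Disjoint k g := fun g hg hgw hkg =>
    h _ hv_row g hg k hk (hvw.mono (by grind) hgw) (hkv.mono_right (by grind)).symm hkg.symm
  have hmeet_row : ∀ f ∈ A, f ⊆ {w₀, w₁, w₂, w₃} → ¬ Disjoint k f := fun f hf hfw hkf =>
    h f hf _ hv_col k hk (hvw.mono (by grind) hfw).symm hkf.symm (hkv.mono_right (by grind)).symm
  exact eq_diagonal_of_not_disjoint (hC hk) hw (hmeet_row _ hw_row (by grind))
    (hmeet_row _ hw_row' (by grind)) (hmeet_col _ hw_col (by grind))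
    (hmeet_col _ hw_col' (by grind))

theorem exists_isTwoGrids_of_grid (h : IsRainbowFree A B C) (hA : IsMatching A)
    (hB : IsMatching B) (hC : IsMatching C) (hC3 : #C = 3) {v₀ v₁ v₂ v₃ : V}
    {f f' g g' : Finset V} (hv : [v₀, v₁, v₂, v₃].Nodup) (hA_eq : A = {{v₀, v₁}, {v₂, v₃}, f, f'})
    (hB_eq : B = {{v₀, v₂}, {v₁, v₃}, g, g'}) (hff' : Disjoint f f') (hgg' : Disjoint g g')
    (hf : Disjoint f {v₀, v₁, v₂, v₃}) (hf' : Disjoint f' {v₀, v₁, v₂, v₃})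
    (hg : Disjoint g {v₀, v₁, v₂, v₃}) (hg' : Disjoint g' {v₀, v₁, v₂, v₃})
    (hd : {v₀, v₃} ∈ C) (hv₁ : v₁ ∉ C.biUnion id) (hv₂ : v₂ ∉ C.biUnion id) :
    ∃ w₀ w₁ w₂ w₃, IsTwoGrids A B C v₀ v₁ v₂ v₃ w₀ w₁ w₂ w₃ := by
  have hfA : f ∈ A := by simp [hA_eq]
  have hf'A : f' ∈ A := by simp [hA_eq]
  have hgB : g ∈ B := by simp [hB_eq]
  have hg'B : g' ∈ B := by simp [hB_eq]
  have hd_sub : ({v₀, v₃} : Finset V) ⊆ {v₀, v₁, v₂, v₃} := by grind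
  have hmeet : ∀ f ∈ A, ∀ g ∈ B, Disjoint f {v₀, v₁, v₂, v₃} → Disjoint g {v₀, v₁, v₂, v₃} →
      ¬ Disjoint f g := fun f hf g hg hfv hgv hfg =>
    h f hf g hg _ hd hfg (hfv.mono_right hd_sub) (hgv.mono_right hd_sub)
  obtain ⟨w₀, w₁, w₂, w₃, hw, rfl, rfl, rfl, rfl⟩ := exists_grid (hA.sized hfA) (hA.sized hf'A)
    (hB.sized hgB) (hB.sized hg'B) hff' hgg' (hmeet f hfA g hgB hf hg)
    (hmeet f hfA g' hg'B hf hg') (hmeet f' hf'A g hgB hf' hg) (hmeet f' hf'A g' hg'B hf' hg')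
  have hwv : Disjoint ({w₀, w₁, w₂, w₃} : Finset V) {v₀, v₁, v₂, v₃} :=
    (disjoint_union_left.2 ⟨hf, hf'⟩).mono_left (by grind)
  have hvw : Disjoint {v₀, v₁, v₂} ({w₀, w₁, w₂, w₃} : Finset V) :=
    (hwv.mono_right (by grind)).symm
  have hdiag : C ⊆ {{v₀, v₃}, {w₀, w₃}, {w₁, w₂}} := by
    intro k hk
    rw [mem_insert, mem_insert, mem_singleton, or_iff_not_imp_left]
    intro hkd
    have hkd : Disjoint k {v₀, v₃} := hC.pairwiseDisjoint hk hd hkd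
    have hkv : Disjoint k {v₀, v₁, v₂} := by
      rw [disjoint_insert_right] at hkd
      rw [disjoint_insert_right, disjoint_insert_right, disjoint_singleton_right]
      exact ⟨hkd.1, fun hv => hv₁ (mem_biUnion.2 ⟨k, hk, hv⟩),
        fun hv => hv₂ (mem_biUnion.2 ⟨k, hk, hv⟩)⟩
    exact h.eq_diagonal_of_mem hC.sized hw hvw (by simp [hA_eq]) hfA hf'A (by simp [hB_eq]) hgB
      hg'B hk hkv
  refine ⟨w₀, w₁, w₂, w₃, hv.append hw ?_, hA_eq, hB_eq,
    eq_of_subset_of_card_le hdiag (card_le_three.trans hC3.ge)⟩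
  intro x hxv hxw
  exact disjoint_left.1 hwv (by simpa using hxw) (by simpa using hxv)

theorem exists_isTwoGrids (h : IsRainbowFree A B C) (hA : IsMatching A) (hB : IsMatching B)
    (hC : IsMatching C) (hA4 : #A = 4) (hB4 : #B = 4) (hC3 : #C = 3) :
    ∃ v₀ v₁ v₂ v₃ w₀ w₁ w₂ w₃, IsTwoGrids A B C v₀ v₁ v₂ v₃ w₀ w₁ w₂ w₃ := by
  obtain ⟨v₀, v₁, v₂, v₃, hv, hr, hr', hc, hc', hv₀, hv₁, hv₂⟩ :=
    h.exists_grid_diagonal_mem_biUnion hA hB hC hA4.ge hB4.ge hC3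
  have hr_ne : ({v₀, v₁} : Finset V) ≠ {v₂, v₃} := by
    intro heq
    have : v₀ ∈ ({v₂, v₃} : Finset V) := heq ▸ mem_insert_self _ _
    grind
  have hc_ne : ({v₀, v₂} : Finset V) ≠ {v₁, v₃} := by
    intro heq
    have : v₀ ∈ ({v₁, v₃} : Finset V) := heq ▸ mem_insert_self _ _
    grind
  have hrows : ({v₀, v₁} ∪ {v₂, v₃} : Finset V) = {v₀, v₁, v₂, v₃} := by grind
  have hcols : ({v₀, v₂} ∪ {v₁, v₃} : Finset V) = {v₀, v₁, v₂, v₃} := by grind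
  obtain ⟨f, f', hff', hf, hf', hA_eq⟩ :=
    exists_eq_insert_insert_pair hA.pairwiseDisjoint hA4 hr hr' hr_ne
  obtain ⟨g, g', hgg', hg, hg', hB_eq⟩ :=
    exists_eq_insert_insert_pair hB.pairwiseDisjoint hB4 hc hc' hc_ne
  rw [hrows] at hf hf'
  rw [hcols] at hg hg'
  have hd : {v₀, v₃} ∈ C := h.pair_mem_of_notMem_biUnion hC.sized hr' (g := g) (g' := g')
    (by simp [hB_eq]) (by simp [hB_eq]) hgg' (hg.mono_right (by grind)).symm
    (hg'.mono_right (by grind)).symm hv₀ hv₂ (by grind) (by simp_all) (by simp_all)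
  exact ⟨v₀, v₁, v₂, v₃, h.exists_isTwoGrids_of_grid hA hB hC hC3 hv hA_eq hB_eq hff' hgg' hf hf'
    hg hg' hd hv₁ hv₂⟩

end IsRainbowFree

end Matching

section Link

variable {V : Type*} [DecidableEq V] {r : ℕ} {E : Finset (Finset V)} {e f k : Finset V}

theorem card_memberSubfamily (E : Finset (Finset V)) (x : V) :
    #(E.memberSubfamily x) = degree E x := by
  rw [memberSubfamily, card_image_of_injOn, degree]
  exact (erase_injOn' x).mono fun f hf => (mem_filter.1 hf).2

theorem card_memberSubfamily_erase_add_one {x : V} (he : e ∈ E) (hx : x ∈ e) :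
    #((E.erase e).memberSubfamily x) + 1 = degree E x := by
  rw [card_memberSubfamily, degree, degree, filter_erase]
  exact card_erase_add_one (mem_filter.2 ⟨he, hx⟩)

namespace IsLinear

theorem erase (hlin : IsLinear r E) (e : Finset V) : IsLinear r (E.erase e) :=
  ⟨fun f hf => hlin.1 f (mem_of_mem_erase hf),
    fun f hf g hg => hlin.2 f (mem_of_mem_erase hf) g (mem_of_mem_erase hg)⟩

theorem eq_of_mem_of_mem (hlin : IsLinear r E) (he : e ∈ E) (hf : f ∈ E) {x y : V} (hxy : x ≠ y)
    (hxe : x ∈ e) (hye : y ∈ e) (hxf : x ∈ f) (hyf : y ∈ f) : e = f := by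
  by_contra hne
  exact hxy (card_le_one.1 (hlin.2 e he f hf hne) x (by grind) y (by grind))

theorem pairwiseDisjoint_memberSubfamily (hlin : IsLinear r E) (x : V) :
    (E.memberSubfamily x : Set (Finset V)).PairwiseDisjoint id := by
  intro f hf g hg hfg
  rw [mem_coe, mem_memberSubfamily] at hf hg
  refine disjoint_left.2 fun y hyf hyg => hfg ?_
  have heq : insert x f = insert x g := hlin.eq_of_mem_of_mem hf.1 hg.1 (x := x) (y := y)
    (by grind) (by simp) (by grind) (by simp) (by grind)
  rw [← erase_insert hf.2, heq, erase_insert hg.2]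

theorem isMatching_memberSubfamily (hlin : IsLinear 3 E) (x : V) :
    IsMatching (E.memberSubfamily x) where
  sized f hf := by
    rw [mem_coe, mem_memberSubfamily] at hf
    have := hlin.1 _ hf.1
    rwa [card_insert_of_notMem hf.2, Nat.succ_inj] at this
  pairwiseDisjoint := hlin.pairwiseDisjoint_memberSubfamily x

theorem disjoint_of_mem_memberSubfamily_erase (hlin : IsLinear r E) (he : e ∈ E) {x : V}
    (hx : x ∈ e) (hf : f ∈ (E.erase e).memberSubfamily x) : Disjoint f e := by
  rw [mem_memberSubfamily, mem_erase] at hf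
  refine disjoint_left.2 fun y hyf hye => hf.1.1 ?_
  exact hlin.eq_of_mem_of_mem hf.1.2 he (x := x) (y := y) (by grind) (by simp) (by grind) hx hye

theorem notMem_of_pair_mem_memberSubfamily_erase (hlin : IsLinear r E) {x p q : V} (hpq : p ≠ q)
    (h : {p, q} ∈ (E.erase e).memberSubfamily x) (hx : x ∈ e) (hk : k ∈ E) (hke : Disjoint k e)
    (hp : p ∈ k) : q ∉ k := by
  intro hq
  rw [mem_memberSubfamily, mem_erase] at h
  have heq := hlin.eq_of_mem_of_mem h.1.2 hk hpq (by simp) (by simp) hp hq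
  exact disjoint_left.1 hke (heq ▸ mem_insert_self _ _) hx

theorem degree_le_card (hlin : IsLinear r E) {p : V} {S : Finset V} (hp : p ∉ S)
    (hS : ∀ k ∈ E, p ∈ k → ¬ Disjoint k S) : degree E p ≤ #S := by
  rw [← card_memberSubfamily]
  refine (card_le_card_inter_biUnion (hlin.pairwiseDisjoint_memberSubfamily p)
    fun f hf hfS => ?_).trans (card_le_card inter_subset_left)
  rw [mem_memberSubfamily] at hf
  exact hS _ hf.1 (mem_insert_self p f) (disjoint_insert_left.2 ⟨hp, hfS⟩)

theorem card_inter_eq_one (hlin : IsLinear r E) (he : e ∈ E) (hf : f ∈ E) (hne : e ≠ f) {x : V}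
    (hxe : x ∈ e) (hxf : x ∈ f) : #(e ∩ f) = 1 :=
  (hlin.2 e he f hf hne).antisymm (card_pos.2 ⟨x, mem_inter.2 ⟨hxe, hxf⟩⟩)

end IsLinear

end Link

section CrownFree

variable {V : Type*} [DecidableEq V] {E : Finset (Finset V)} {e k : Finset V} {a b c : V}

theorem not_disjoint_of_not_hasCrown (hlin : IsLinear 3 E) (hfree : ¬ HasCrown 3 E) (he : e ∈ E)
    (ha : a ∈ e) (hb : b ∈ e) (hc : c ∈ e) {f g h : Finset V} (hf : f ∈ E) (hg : g ∈ E)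
    (hh : h ∈ E) (haf : a ∈ f) (hbg : b ∈ g) (hch : c ∈ h) (hfg : Disjoint f g)
    (hfh : Disjoint f h) : ¬ Disjoint g h := by
  intro hgh
  have hef : e ≠ f := fun hef => disjoint_left.1 hfg (hef ▸ hb) hbg
  have heg : e ≠ g := fun heg => disjoint_left.1 hgh (heg ▸ hc) hch
  have heh : e ≠ h := fun heh => disjoint_left.1 hfh haf (heh ▸ ha)
  refine hfree ⟨e, he, ![f, g, h], ?_, ?_, ?_, ?_⟩
  · simp [Fin.forall_fin_succ, hf, hg, hh]
  · simp [Fin.forall_fin_succ, hef.symm, heg.symm, heh.symm]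
  · simp [Fin.forall_fin_succ, ← disjoint_iff_inter_eq_empty, hfg, hfg.symm, hfh, hfh.symm, hgh,
      hgh.symm]
  · simp [Fin.forall_fin_succ, hlin.card_inter_eq_one he hf hef ha haf,
      hlin.card_inter_eq_one he hg heg hb hbg, hlin.card_inter_eq_one he hh heh hc hch]

theorem isRainbowFree_memberSubfamily (hlin : IsLinear 3 E) (hfree : ¬ HasCrown 3 E)
    (hnodup : [a, b, c].Nodup) (he : {a, b, c} ∈ E) :
    IsRainbowFree ((E.erase {a, b, c}).memberSubfamily a)
      ((E.erase {a, b, c}).memberSubfamily b) ((E.erase {a, b, c}).memberSubfamily c) := by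
  intro f hf g hg h hh hfg hfh hgh
  have hfe := hlin.disjoint_of_mem_memberSubfamily_erase he (by simp) hf
  have hge := hlin.disjoint_of_mem_memberSubfamily_erase he (by simp) hg
  have hhe := hlin.disjoint_of_mem_memberSubfamily_erase he (by simp) hh
  rw [mem_memberSubfamily, mem_erase] at hf hg hh
  refine not_disjoint_of_not_hasCrown hlin hfree he (a := a) (b := b) (c := c) (by simp) (by simp)
    (by simp) hf.1.2 hg.1.2 hh.1.2 (by simp) (by simp) (by simp) ?_ ?_ ?_ <;>
  simp_all [eq_comm]

theorem false_of_degree_le (hlin : IsLinear 3 E) (hfree : ¬ HasCrown 3 E)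
    (hnodup : [a, b, c].Nodup) (he : {a, b, c} ∈ E) (ha : 6 ≤ degree E a) (hb : 4 ≤ degree E b)
    (hc : 2 ≤ degree E c) : False := by
  have ha' := card_memberSubfamily_erase_add_one he (x := a) (by simp)
  have hb' := card_memberSubfamily_erase_add_one he (x := b) (by simp)
  have hc' := card_memberSubfamily_erase_add_one he (x := c) (by simp)
  have hlink := (hlin.erase {a, b, c}).isMatching_memberSubfamily
  exact (isRainbowFree_memberSubfamily hlin hfree hnodup he).false_of_card_le
    (hlink a).pairwiseDisjoint (hlink b) (hlink c).sized (by lia) (by lia) (card_pos.1 (by lia))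

theorem not_disjoint_of_rainbow_triangle (hlin : IsLinear 3 E) (hfree : ¬ HasCrown 3 E)
    (he : e ∈ E) (ha : a ∈ e) (hb : b ∈ e) (hc : c ∈ e) (hab : a ≠ b) {p q r s t : V}
    (hnodup : [p, q, r, s, t].Nodup) (hpq : {p, q} ∈ (E.erase e).memberSubfamily a)
    (hqr : {q, r} ∈ (E.erase e).memberSubfamily b) (hpr : {p, r} ∈ (E.erase e).memberSubfamily c)
    (hst : {s, t} ∈ (E.erase e).memberSubfamily a) (hk : k ∈ E) (hke : Disjoint k e) (hp : p ∈ k) :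
    ¬ Disjoint k {s, t} := by
  intro hkst
  have hak : a ∉ k := fun hak => disjoint_left.1 hke hak ha
  have hbk : b ∉ k := fun hbk => disjoint_left.1 hke hbk hb
  have hqk := hlin.notMem_of_pair_mem_memberSubfamily_erase (by grind) hpq ha hk hke hp
  have hrk := hlin.notMem_of_pair_mem_memberSubfamily_erase (by grind) hpr hc hk hke hp
  have hst_e := hlin.disjoint_of_mem_memberSubfamily_erase he ha hst
  have hqr_e := hlin.disjoint_of_mem_memberSubfamily_erase he hb hqr
  rw [mem_memberSubfamily, mem_erase] at hpq hqr hst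
  refine not_disjoint_of_not_hasCrown hlin hfree hpq.1.2 (a := p) (b := a) (c := q) (by simp)
    (by simp) (by simp) hk hst.1.2 hqr.1.2 hp (by simp) (by simp) ?_ ?_ ?_
  · exact disjoint_insert_right.2 ⟨hak, hkst⟩
  · simp [hbk, hqk, hrk]
  · simp only [disjoint_insert_left, disjoint_singleton_left, mem_insert, mem_singleton] at *
    grind

theorem not_disjoint_of_grid (hlin : IsLinear 3 E) (hfree : ¬ HasCrown 3 E) (he : e ∈ E)
    (ha : a ∈ e) (hb : b ∈ e) (hc : c ∈ e) (hab : a ≠ b) (hac : a ≠ c) {p q r s t u : V}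
    (hnodup : [p, q, r, s, t, u].Nodup) (hpq : {p, q} ∈ (E.erase e).memberSubfamily a)
    (hrs : {r, s} ∈ (E.erase e).memberSubfamily a) (hpr : {p, r} ∈ (E.erase e).memberSubfamily b)
    (hqs : {q, s} ∈ (E.erase e).memberSubfamily b) (hps : {p, s} ∈ (E.erase e).memberSubfamily c)
    (htu : {t, u} ∈ (E.erase e).memberSubfamily a) (hk : k ∈ E) (hke : Disjoint k e)
    (hmeet : ¬ Disjoint k {p, q, r, s}) : ¬ Disjoint k {t, u} := by
  have hqp := pair_comm p q ▸ hpq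
  have hsr := pair_comm r s ▸ hrs
  have hrp := pair_comm p r ▸ hpr
  have hsq := pair_comm q s ▸ hqs
  have hsp := pair_comm p s ▸ hps
  obtain ⟨x, hxk, hx⟩ := not_disjoint_iff.1 hmeet
  simp only [mem_insert, mem_singleton] at hx
  rcases hx with rfl | rfl | rfl | rfl
  · exact not_disjoint_of_rainbow_triangle hlin hfree he ha hb hc hab (by grind) hpq hqs hps htu
      hk hke hxk
  · exact not_disjoint_of_rainbow_triangle hlin hfree he ha hc hb hac (by grind) hqp hps hqs htu
      hk hke hxk
  · exact not_disjoint_of_rainbow_triangle hlin hfree he ha hc hb hac (by grind) hrs hsp hrp htu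
      hk hke hxk
  · exact not_disjoint_of_rainbow_triangle hlin hfree he ha hb hc hab (by grind) hsr hrp hsp htu
      hk hke hxk

theorem IsTwoGrids.disjoint {C : Finset (Finset V)} {v₀ v₁ v₂ v₃ w₀ w₁ w₂ w₃ : V}
    (hgrids : IsTwoGrids ((E.erase e).memberSubfamily a) ((E.erase e).memberSubfamily b) C
      v₀ v₁ v₂ v₃ w₀ w₁ w₂ w₃) (hlin : IsLinear 3 E) (hfree : ¬ HasCrown 3 E) (he : e ∈ E)
    (ha : a ∈ e) (hb : b ∈ e) (hc : c ∈ e) (hab : a ≠ b) (hac : a ≠ c)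
    (hC : C ⊆ (E.erase e).memberSubfamily c) (hk : k ∈ E) (hke : Disjoint k e) :
    Disjoint k {v₀, v₁, v₂, v₃, w₀, w₁, w₂, w₃} := by
  have hnodup := hgrids.nodup
  have hvw₀₁ : [v₀, v₁, v₂, v₃, w₀, w₁].Nodup := by grind
  have hvw₂₃ : [v₀, v₁, v₂, v₃, w₂, w₃].Nodup := by grind
  have hwv₀₁ : [w₀, w₁, w₂, w₃, v₀, v₁].Nodup := by grind
  have hw : (w₀ ≠ w₁ ∧ w₀ ≠ w₂ ∧ w₀ ≠ w₃) ∧ (w₁ ≠ w₂ ∧ w₁ ≠ w₃) ∧ w₂ ≠ w₃ := by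
    simp_all
  have hrow : ∀ f ∈ ({{v₀, v₁}, {v₂, v₃}, {w₀, w₁}, {w₂, w₃}} : Finset (Finset V)),
      f ∈ (E.erase e).memberSubfamily a := fun _ hf => hgrids.rows ▸ hf
  have hcol : ∀ f ∈ ({{v₀, v₂}, {v₁, v₃}, {w₀, w₂}, {w₁, w₃}} : Finset (Finset V)),
      f ∈ (E.erase e).memberSubfamily b := fun _ hf => hgrids.columns ▸ hf
  have hdiag : ∀ f ∈ ({{v₀, v₃}, {w₀, w₃}, {w₁, w₂}} : Finset (Finset V)),
      f ∈ (E.erase e).memberSubfamily c := fun _ hf => hC (hgrids.diagonals ▸ hf)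
  simp only [mem_insert, mem_singleton, forall_eq_or_imp, forall_eq] at hrow hcol hdiag
  have hline : ∀ x ∈ e, ∀ y z, y ≠ z → {y, z} ∈ (E.erase e).memberSubfamily x → y ∈ k → z ∉ k :=
    fun x hx y z hyz hyz_link =>
      hlin.notMem_of_pair_mem_memberSubfamily_erase hyz hyz_link hx hk hke
  have hdv : Disjoint k {v₀, v₁, v₂, v₃} := by
    by_contra hmeet
    have hmeet_row := not_disjoint_of_grid hlin hfree he ha hb hc hab hac hvw₀₁
      hrow.1 hrow.2.1 hcol.1 hcol.2.1 hdiag.1 hrow.2.2.1 hk hke hmeet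
    have hmeet_row' := not_disjoint_of_grid hlin hfree he ha hb hc hab hac hvw₂₃
      hrow.1 hrow.2.1 hcol.1 hcol.2.1 hdiag.1 hrow.2.2.2 hk hke hmeet
    simp only [disjoint_insert_right, disjoint_singleton_right, not_and_or, not_not]
      at hmeet_row hmeet_row'
    rcases hmeet_row with h₀ | h₁ <;> rcases hmeet_row' with h₂ | h₃
    · exact hline b hb w₀ w₂ hw.1.2.1 hcol.2.2.1 h₀ h₂
    · exact hline c hc w₀ w₃ hw.1.2.2 hdiag.2.1 h₀ h₃
    · exact hline c hc w₁ w₂ hw.2.1.1 hdiag.2.2 h₁ h₂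
    · exact hline b hb w₁ w₃ hw.2.1.2 hcol.2.2.2 h₁ h₃
  have hdw : Disjoint k {w₀, w₁, w₂, w₃} := by
    by_contra hmeet
    exact not_disjoint_of_grid hlin hfree he ha hb hc hab hac hwv₀₁
      hrow.2.2.1 hrow.2.2.2 hcol.2.2.1 hcol.2.2.2 hdiag.2.1 hrow.1 hk hke hmeet
      (hdv.mono_right (insert_subset_insert _ (by simp)))
  simp only [disjoint_insert_right, disjoint_singleton_right] at hdv hdw ⊢
  exact ⟨hdv.1, hdv.2.1, hdv.2.2.1, hdv.2.2.2, hdw⟩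

theorem IsTwoGrids.degree_le_three {C : Finset (Finset V)} {v₀ v₁ v₂ v₃ w₀ w₁ w₂ w₃ : V}
    (hgrids : IsTwoGrids ((E.erase e).memberSubfamily a) ((E.erase e).memberSubfamily b) C
      v₀ v₁ v₂ v₃ w₀ w₁ w₂ w₃) (hlin : IsLinear 3 E) (hfree : ¬ HasCrown 3 E) (he : e ∈ E)
    (ha : a ∈ e) (hb : b ∈ e) (hc : c ∈ e) (hab : a ≠ b) (hac : a ≠ c)
    (hC : C ⊆ (E.erase e).memberSubfamily c) {f : Finset V}
    (hf : f ∈ (E.erase e).memberSubfamily a ∪ (E.erase e).memberSubfamily b ∪ C) {p : V}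
    (hp : p ∈ f) : degree E p ≤ 3 := by
  have hfe : Disjoint f e := by
    rw [mem_union, mem_union] at hf
    rcases hf with (hf | hf) | hf
    · exact hlin.disjoint_of_mem_memberSubfamily_erase he ha hf
    · exact hlin.disjoint_of_mem_memberSubfamily_erase he hb hf
    · exact hlin.disjoint_of_mem_memberSubfamily_erase he hc (hC hf)
  have hf_sub : f ⊆ {v₀, v₁, v₂, v₃, w₀, w₁, w₂, w₃} := by
    clear hfe
    rw [hgrids.rows, hgrids.columns, hgrids.diagonals] at hf
    simp only [mem_union, mem_insert, mem_singleton] at hf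
    rcases hf with ((rfl | rfl | rfl | rfl) | (rfl | rfl | rfl | rfl)) | (rfl | rfl | rfl) <;>
      simp [insert_subset_iff]
  rw [← hlin.1 e he]
  refine hlin.degree_le_card (disjoint_left.1 hfe hp) fun k hk hpk hke => ?_
  exact disjoint_left.1 (hgrids.disjoint hlin hfree he ha hb hc hab hac hC hk hke) hpk (hf_sub hp)

theorem degree_le_three_of_mem_memberSubfamily (hlin : IsLinear 3 E) (hfree : ¬ HasCrown 3 E)
    (hnodup : [a, b, c].Nodup) (he : {a, b, c} ∈ E) (ha : degree E a = 5) (hb : degree E b = 5)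
    (hc : 4 ≤ degree E c) {x : V} (hx : x ∈ ({a, b, c} : Finset V)) {f : Finset V}
    (hf : f ∈ (E.erase {a, b, c}).memberSubfamily x) {p : V} (hp : p ∈ f) : degree E p ≤ 3 := by
  have ha' := card_memberSubfamily_erase_add_one he (x := a) (by simp)
  have hb' := card_memberSubfamily_erase_add_one he (x := b) (by simp)
  have hc' := card_memberSubfamily_erase_add_one he (x := c) (by simp)
  have hc3 : 3 ≤ #((E.erase {a, b, c}).memberSubfamily c) := by lia
  have hlink := (hlin.erase {a, b, c}).isMatching_memberSubfamily
  obtain ⟨C, hC, hC3, hfC⟩ : ∃ C ⊆ (E.erase {a, b, c}).memberSubfamily c, #C = 3 ∧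
      f ∈ (E.erase {a, b, c}).memberSubfamily a ∪ (E.erase {a, b, c}).memberSubfamily b ∪ C := by
    simp only [mem_insert, mem_singleton] at hx
    rcases hx with rfl | rfl | rfl
    · obtain ⟨C, hC, hC3⟩ := exists_subset_card_eq hc3
      exact ⟨C, hC, hC3, by simp [hf]⟩
    · obtain ⟨C, hC, hC3⟩ := exists_subset_card_eq hc3
      exact ⟨C, hC, hC3, by simp [hf]⟩
    · obtain ⟨C, hfC, hC, hC3⟩ := exists_subsuperset_card_eq (singleton_subset_iff.2 hf)
        (by simp : _ ≤ 3) hc3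
      exact ⟨C, hC, hC3, by simp [singleton_subset_iff.1 hfC]⟩
  obtain ⟨v₀, v₁, v₂, v₃, w₀, w₁, w₂, w₃, hgrids⟩ :=
    ((isRainbowFree_memberSubfamily hlin hfree hnodup he).mono_right hC).exists_isTwoGrids
      (hlink a) (hlink b) ((hlink c).mono hC) (by lia) (by lia) hC3
  exact hgrids.degree_le_three hlin hfree he (by simp) (by simp) (by simp) (by grind) (by grind)
    hC hfC hp

end CrownFree

section Discharging

variable {V : Type*} [DecidableEq V] {E : Finset (Finset V)} {e f : Finset V} {v x y : V}

/-- An edge on which every vertex has degree at most 5, but which would receive less than `2/3` if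
each vertex divided one unit equally among its edges. -/
def IsHeavy (E : Finset (Finset V)) (e : Finset V) : Prop :=
  e ∈ E ∧ (∀ v ∈ e, degree E v ≤ 5) ∧ ∑ v ∈ e, (degree E v : ℝ)⁻¹ < 2 / 3

open Classical in
/-- The charge that the vertex `v` gives to an edge `e` through it. A vertex of a heavy edge gives
its unit of charge to heavy edges only, other vertices of degree at most 5 divide it equally, and
vertices of degree at least 6 give nothing. -/
noncomputable def share (E : Finset (Finset V)) (e : Finset V) (v : V) : ℝ :=
  if ∃ f, IsHeavy E f ∧ v ∈ f then if IsHeavy E e then 1 else 0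
  else if degree E v ≤ 5 then (degree E v : ℝ)⁻¹ else 0

theorem exists_eq_triple (he : #e = 3) (hx : x ∈ e) (hy : y ∈ e) (hxy : x ≠ y) :
    ∃ z, [x, y, z].Nodup ∧ e = {x, y, z} := by
  obtain ⟨z, hz⟩ : ∃ z, (e.erase x).erase y = {z} := by
    rw [← card_eq_one, card_erase_of_mem (by grind), card_erase_of_mem hx, he]
  have hz_mem : z ∈ (e.erase x).erase y := hz ▸ mem_singleton_self z
  simp only [mem_erase] at hz_mem
  refine ⟨z, by simp [hxy, hz_mem.1.symm, hz_mem.2.1.symm], ?_⟩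
  rw [← hz, insert_erase (mem_erase.2 ⟨hxy.symm, hy⟩), insert_erase hx]

theorem inv_le_inv_degree (he : e ∈ E) (hv : v ∈ e) {n : ℕ} (hn : degree E v ≤ n) :
    (n : ℝ)⁻¹ ≤ (degree E v : ℝ)⁻¹ := by
  have hpos : 0 < degree E v := card_pos.2 ⟨e, mem_filter.2 ⟨he, hv⟩⟩
  exact inv_anti₀ (by exact_mod_cast hpos) (by exact_mod_cast hn)

namespace IsHeavy

theorem four_le_degree (hlin : IsLinear 3 E) (he : IsHeavy E e) (hx : x ∈ e) :
    4 ≤ degree E x := by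
  obtain ⟨heE, hdeg, hsum⟩ := he
  by_contra! hlt
  have hx3 := inv_le_inv_degree heE hx (n := 3) (by lia)
  have hothers : #(e.erase x) • ((5 : ℕ) : ℝ)⁻¹ ≤ ∑ y ∈ e.erase x, (degree E y : ℝ)⁻¹ :=
    card_nsmul_le_sum _ _ _ fun y hy =>
      inv_le_inv_degree heE (mem_of_mem_erase hy) (hdeg y (mem_of_mem_erase hy))
  rw [card_erase_of_mem hx, hlin.1 e heE] at hothers
  rw [← add_sum_erase _ _ hx] at hsum
  norm_num at hx3 hothers
  linarith

theorem degree_eq_five (hlin : IsLinear 3 E) (he : IsHeavy E e) (hx : x ∈ e) (hy : y ∈ e)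
    (hxy : x ≠ y) (hx5 : degree E x ≠ 5) : degree E y = 5 := by
  obtain ⟨heE, hdeg, hsum⟩ := he
  by_contra hy5
  obtain ⟨z, hnodup, rfl⟩ := exists_eq_triple (hlin.1 e heE) hx hy hxy
  rw [sum_insert (by grind), sum_pair (by grind)] at hsum
  have hx_le := hdeg x hx
  have hy_le := hdeg y hy
  have hx4 := inv_le_inv_degree heE hx (n := 4) (by lia)
  have hy4 := inv_le_inv_degree heE hy (n := 4) (by lia)
  have hz5 := inv_le_inv_degree heE (by simp) (hdeg z (by simp))
  norm_num at hx4 hy4 hz5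
  linarith

theorem exists_eq (hlin : IsLinear 3 E) (he : IsHeavy E e) :
    ∃ a b c, [a, b, c].Nodup ∧ e = {a, b, c} ∧ degree E a = 5 ∧ degree E b = 5 ∧
      4 ≤ degree E c := by
  have hcard := hlin.1 e he.1
  obtain ⟨c, hc, hothers⟩ : ∃ c ∈ e, ∀ a ∈ e, a ≠ c → degree E a = 5 := by
    by_cases h : ∃ c ∈ e, degree E c ≠ 5
    · obtain ⟨c, hc, hc5⟩ := h
      exact ⟨c, hc, fun a ha hac => he.degree_eq_five hlin hc ha hac.symm hc5⟩
    · push Not at h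
      obtain ⟨c, hc⟩ := card_pos.1 (by lia : 0 < #e)
      exact ⟨c, hc, fun a ha _ => h a ha⟩
  obtain ⟨a, ha, hac⟩ := exists_mem_ne (by lia : 1 < #e) c
  obtain ⟨b, hnodup, rfl⟩ := exists_eq_triple hcard ha hc hac
  exact ⟨a, b, c, by grind, by grind, hothers a ha hac, hothers b (by simp) (by grind),
    he.four_le_degree hlin hc⟩

theorem degree_le_three (hlin : IsLinear 3 E) (hfree : ¬ HasCrown 3 E) (he : IsHeavy E e)
    (hf : f ∈ E) (hfe : f ≠ e) {p : V} (hxe : x ∈ e) (hxf : x ∈ f) (hpf : p ∈ f) (hpx : p ≠ x) :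
    degree E p ≤ 3 := by
  obtain ⟨a, b, c, hnodup, rfl, ha, hb, hc⟩ := he.exists_eq hlin
  refine degree_le_three_of_mem_memberSubfamily hlin hfree hnodup he.1 ha hb hc hxe
    (f := f.erase x) ?_ (mem_erase.2 ⟨hpx, hpf⟩)
  rw [mem_memberSubfamily, insert_erase hxf, mem_erase]
  exact ⟨⟨hfe, hf⟩, notMem_erase x f⟩

end IsHeavy

theorem share_nonneg (E : Finset (Finset V)) (e : Finset V) (v : V) : 0 ≤ share E e v := by
  unfold share
  split_ifs <;> positivity

theorem share_of_degree_le_three (hlin : IsLinear 3 E) (e : Finset V) (hdeg : degree E v ≤ 3) :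
    share E e v = (degree E v : ℝ)⁻¹ := by
  have hlight : ¬ ∃ f, IsHeavy E f ∧ v ∈ f := by
    rintro ⟨f, hf, hvf⟩
    have := hf.four_le_degree hlin hvf
    lia
  rw [share, if_neg hlight, if_pos (by lia)]

theorem sum_share_le (hlin : IsLinear 3 E) (hfree : ¬ HasCrown 3 E) (v : V) :
    ∑ e ∈ E with v ∈ e, share E e v ≤ if 6 ≤ degree E v then 0 else 1 := by
  classical
  by_cases hheavy : ∃ f, IsHeavy E f ∧ v ∈ f
  · obtain ⟨f, hf, hvf⟩ := id hheavy
    have hle := hf.2.1 v hvf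
    have hcard : #{e ∈ {e ∈ E | v ∈ e} | IsHeavy E e} ≤ 1 := by
      refine card_le_one.2 fun e he f hf => ?_
      simp only [mem_filter] at he hf
      by_contra hne
      obtain ⟨p, hp, hpv⟩ := exists_mem_ne (by rw [hlin.1 f hf.1.1]; norm_num : 1 < #f) v
      have hle := he.2.degree_le_three hlin hfree hf.1.1 (Ne.symm hne) he.1.2 hf.1.2 hp hpv
      have hge := hf.2.four_le_degree hlin hp
      lia
    simp only [share, if_pos hheavy]
    rw [sum_boole, if_neg (by lia)]
    exact_mod_cast hcard
  · simp only [share, if_neg hheavy]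
    split_ifs with hle hge
    · lia
    · rw [sum_const, nsmul_eq_mul]
      exact mul_inv_le_one
    · simp
    · simp

theorem IsHeavy.two_thirds_le_sum_share (hlin : IsLinear 3 E) (he : IsHeavy E e) :
    2 / 3 ≤ ∑ v ∈ e, share E e v := by
  obtain ⟨v, hv⟩ := card_pos.1 (by rw [hlin.1 e he.1]; norm_num : 0 < #e)
  refine le_trans ?_ (single_le_sum (fun v _ => share_nonneg E e v) hv)
  rw [share, if_pos ⟨e, he, hv⟩, if_pos he]
  norm_num

theorem two_thirds_le_sum_share_of_degree_le_three (hlin : IsLinear 3 E) (he : e ∈ E)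
    (hx : x ∈ e) (hdeg : ∀ y ∈ e, y ≠ x → degree E y ≤ 3) : 2 / 3 ≤ ∑ v ∈ e, share E e v := by
  have hothers : #(e.erase x) • ((3 : ℕ) : ℝ)⁻¹ ≤ ∑ y ∈ e.erase x, share E e y := by
    refine card_nsmul_le_sum _ _ _ fun y hy => ?_
    have hy_mem := mem_of_mem_erase hy
    have hy3 := hdeg y hy_mem (ne_of_mem_erase hy)
    exact share_of_degree_le_three hlin e hy3 ▸ inv_le_inv_degree he hy_mem hy3
  rw [card_erase_of_mem hx, hlin.1 e he] at hothers
  rw [← add_sum_erase _ _ hx]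
  have := share_nonneg E e x
  norm_num at hothers
  linarith

theorem two_thirds_le_sum_share_of_six_le_degree (hlin : IsLinear 3 E) (hfree : ¬ HasCrown 3 E)
    (he : e ∈ E) (hx : x ∈ e) (hdeg : 6 ≤ degree E x) : 2 / 3 ≤ ∑ v ∈ e, share E e v := by
  by_cases hsmall : ∀ y ∈ e, y ≠ x → degree E y ≤ 3
  · exact two_thirds_le_sum_share_of_degree_le_three hlin he hx hsmall
  push Not at hsmall
  obtain ⟨y, hy, hyx, hy4⟩ := hsmall
  obtain ⟨z, hnodup, rfl⟩ := exists_eq_triple (hlin.1 e he) hx hy hyx.symm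
  have hz_pos : 0 < degree E z := card_pos.2 ⟨_, mem_filter.2 ⟨he, by simp⟩⟩
  have hz : degree E z = 1 := by
    by_contra hz
    exact false_of_degree_le hlin hfree hnodup he hdeg hy4 (by lia)
  refine le_trans ?_ (single_le_sum (fun v _ => share_nonneg E _ v) (by simp : z ∈ _))
  rw [share_of_degree_le_three hlin _ (by lia), hz]
  norm_num

theorem two_thirds_le_sum_share (hlin : IsLinear 3 E) (hfree : ¬ HasCrown 3 E) (he : e ∈ E) :
    2 / 3 ≤ ∑ v ∈ e, share E e v := by
  by_cases hheavy : IsHeavy E e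
  · exact hheavy.two_thirds_le_sum_share hlin
  by_cases hmeet : ∃ x ∈ e, ∃ f, IsHeavy E f ∧ x ∈ f
  · obtain ⟨x, hxe, f, hf, hxf⟩ := hmeet
    have hef : e ≠ f := fun hef => hheavy (hef ▸ hf)
    exact two_thirds_le_sum_share_of_degree_le_three hlin he hxe fun y hy hyx =>
      hf.degree_le_three hlin hfree he hef hxf hxe hy hyx
  push Not at hmeet
  by_cases hlarge : ∃ x ∈ e, 6 ≤ degree E x
  · obtain ⟨x, hx, hx6⟩ := hlarge
    exact two_thirds_le_sum_share_of_six_le_degree hlin hfree he hx hx6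
  push Not at hlarge
  have hdeg : ∀ x ∈ e, degree E x ≤ 5 := fun x hx => Nat.le_of_lt_succ (hlarge x hx)
  have hshare : ∀ x ∈ e, share E e x = (degree E x : ℝ)⁻¹ := by
    intro x hx
    rw [share, if_neg (by simpa using hmeet x hx), if_pos (hdeg x hx)]
  rw [sum_congr rfl hshare]
  exact not_lt.1 fun hlt => hheavy ⟨he, hdeg, hlt⟩

end Discharging

/-- If `G` is a crown-free linear 3-graph on `n` vertices and `s` is the number of
vertices of degree at least 6, then `|E(G)| ≤ 3(n-s)/2`. -/
theorem crown_free_refined_upper_bound {V : Type*} [DecidableEq V] [Fintype V]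
    (E : Finset (Finset V)) (hlin : IsLinear 3 E) (hfree : ¬ HasCrown 3 E)
    (s : ℕ) (hs : s = (Finset.univ.filter (fun v : V => 6 ≤ degree E v)).card) :
    (E.card : ℝ) ≤ 3 * ((Fintype.card V : ℝ) - s) / 2 := by
  have hdouble : ∑ e ∈ E, ∑ v ∈ e, share E e v = ∑ v : V, ∑ e ∈ E with v ∈ e, share E e v :=
    sum_comm' fun e v => by simp
  have hlow : #E • (2 / 3 : ℝ) ≤ ∑ e ∈ E, ∑ v ∈ e, share E e v :=
    card_nsmul_le_sum _ _ _ fun e he => two_thirds_le_sum_share hlin hfree he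
  have hupp : ∑ v : V, ∑ e ∈ E with v ∈ e, share E e v ≤
      ∑ v : V, (1 - if 6 ≤ degree E v then 1 else 0 : ℝ) := by
    refine sum_le_sum fun v _ => (sum_share_le hlin hfree v).trans ?_
    split_ifs <;> norm_num
  rw [sum_sub_distrib, sum_const, card_univ, nsmul_eq_mul, mul_one, sum_boole, ← hs] at hupp
  rw [nsmul_eq_mul] at hlow
  linarith
end

section
/- Let r ≥ 3 and let G be a linear r-uniform hypergraph on n vertices containing no copy of C_{1r} and no copy of C*. If s denotes the number of vertices of G with degree at least (r-1)^2 + 2, then the number of edges of G is at most r(r-2)(n - s)/(r-1). -/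
open Finset

/-!
Discharging: let every vertex of degree at most `(r - 1) ^ 2 + 1` distribute a unit charge among the
edges through it. It suffices that every edge receives at least `(r - 1) / (r * (r - 2))`.

Let `v₀, …, v_{r - 1}` be the vertices of an edge `e` in order of increasing degree. If `v_i` had
degree greater than `i * (r - 1) + 1` for every `i`, one could choose greedily pairwise disjoint
edges, one through each `v_i`, since every edge through another vertex of `e` meets at most `r - 1`
edges through `v_i` apart from `e`; together with `e` they form a crown. So some `i + 1` vertices of
`e` have degree at most `i * (r - 1) + 1`. If `r ≥ 4` and the charges are split evenly, these
vertices alone send at least `r / ((r - 1) ^ 2 + 1) ≥ (r - 1) / (r * (r - 2))` to `e`.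

For `r = 3` this only gives `3 / 5 < 2 / 3`. Here an edge with degrees at least `4, 5, 5` spans a
Fano plane consisting of edges, and the points of this plane outside `e` have degree three. Hence
the other two lines through a vertex of `e` of degree five receive `2 / 3` from their remaining
points, and the vertex only has to split its charge among three edges.
-/

section Combinatorics

lemma exists_independent_transversal {α : Type*} (R : α → α → Prop) [DecidableRel R] (m : ℕ)
    {n : ℕ} (A : Fin n → Finset α)
    (hR : ∀ i j, i < j → ∀ a ∈ A i, #{b ∈ A j | R a b} ≤ m)
    (hA : ∀ i : Fin n, i * m < #(A i)) :
    ∃ f : Fin n → α, (∀ i, f i ∈ A i) ∧ ∀ i j, i < j → ¬ R (f i) (f j) := by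
  classical
  induction n with
  | zero => exact ⟨Fin.elim0, fun i => i.elim0, fun i => i.elim0⟩
  | succ n ih =>
    obtain ⟨f, hf, hfR⟩ := ih (fun i => A i.castSucc)
      (fun i j hij => hR _ _ (Fin.castSucc_lt_castSucc_iff.2 hij)) (fun i => hA i.castSucc)
    let forbidden := univ.biUnion fun i => {b ∈ A (Fin.last n) | R (f i) b}
    have hcard : #forbidden < #(A (Fin.last n)) := by
      refine lt_of_le_of_lt ?_ (hA (Fin.last n))
      simpa using card_biUnion_le_card_mul univ _ m
        fun i _ => hR _ _ (Fin.castSucc_lt_last i) _ (hf i)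
    obtain ⟨b, hb, hbf⟩ := exists_mem_notMem_of_card_lt_card hcard
    have hbR : ∀ i, ¬ R (f i) b := fun i hi =>
      hbf (mem_biUnion.2 ⟨i, mem_univ i, mem_filter.2 ⟨hb, hi⟩⟩)
    refine ⟨Fin.snoc f b, Fin.lastCases (by simpa) (by simpa), fun i j => ?_⟩
    cases j using Fin.lastCases with
    | last =>
      cases i using Fin.lastCases with
      | last => simp
      | cast i => simpa using hbR i
    | cast j =>
      cases i using Fin.lastCases with
      | last => exact fun h => absurd (h.trans (Fin.castSucc_lt_last j)) (lt_irrefl _)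
      | cast i => simpa using hfR i j

lemma exists_monotone_enumeration {α β : Type*} [LinearOrder β] {n : ℕ} (s : Finset α)
    (hs : #s = n) (d : α → β) : ∃ v : Fin n ≃ s, Monotone fun i => d (v i) :=
  let φ := (s.equivFinOfCardEq hs).symm
  ⟨(Tuple.sort fun i => d (φ i)).trans φ, Tuple.monotone_sort fun i => d (φ i)⟩

end Combinatorics

section Biclique

variable {α β : Type*} {R : α → β → Prop} [DecidableRel R] {Y A A' : Finset α}
  {Z B B' : Finset β} {m : ℕ}

/-- `A ⊆ Y` and `B ⊆ Z` form a nonempty complete component of the bipartite graph of `R` between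
`Y` and `Z`: the neighbourhood of every vertex of `A` is `B`, and vice versa. -/
structure IsCompleteComponent (R : α → β → Prop) [DecidableRel R] (Y : Finset α) (Z : Finset β)
    (A : Finset α) (B : Finset β) : Prop where
  nonempty_left : A.Nonempty
  nonempty_right : B.Nonempty
  neighbors_left : ∀ g ∈ A, {h ∈ Z | R g h} = B
  neighbors_right : ∀ h ∈ B, {g ∈ Y | R g h} = A

lemma isCompleteComponent_of_le_card (hA : A ⊆ Y) (hB : B ⊆ Z) (hm : 0 < m) (hmA : m ≤ #A)
    (hmB : m ≤ #B) (hYZ : ∀ g ∈ Y, #{h ∈ Z | R g h} ≤ m) (hZY : ∀ h ∈ Z, #{g ∈ Y | R g h} ≤ m)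
    (hR : ∀ g ∈ A, ∀ h ∈ B, R g h) : IsCompleteComponent R Y Z A B where
  nonempty_left := card_pos.1 (hm.trans_le hmA)
  nonempty_right := card_pos.1 (hm.trans_le hmB)
  neighbors_left g hg := (eq_of_subset_of_card_le
    (fun h hh => mem_filter.2 ⟨hB hh, hR g hg h hh⟩) ((hYZ g (hA hg)).trans hmB)).symm
  neighbors_right h hh := (eq_of_subset_of_card_le
    (fun g hg => mem_filter.2 ⟨hA hg, hR g hg h hh⟩) ((hZY h (hB hh)).trans hmA)).symm

namespace IsCompleteComponent

lemma rel (h : IsCompleteComponent R Y Z A B) {a : α} {b : β} (ha : a ∈ A) (hb : b ∈ B) : R a b :=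
  (mem_filter.1 ((h.neighbors_left a ha).symm ▸ hb)).2

lemma card_left_le (h : IsCompleteComponent R Y Z A B)
    (hm : ∀ b ∈ B, #{a ∈ Y | R a b} ≤ m) : #A ≤ m := by
  obtain ⟨b, hb⟩ := h.nonempty_right
  exact h.neighbors_right b hb ▸ hm b hb

lemma card_right_le (h : IsCompleteComponent R Y Z A B)
    (hm : ∀ a ∈ A, #{b ∈ Z | R a b} ≤ m) : #B ≤ m := by
  obtain ⟨a, ha⟩ := h.nonempty_left
  exact h.neighbors_left a ha ▸ hm a ha

lemma eq_of_right_eq (h : IsCompleteComponent R Y Z A B) (h' : IsCompleteComponent R Y Z A' B) :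
    A = A' := by
  obtain ⟨b, hb⟩ := h.nonempty_right
  exact (h.neighbors_right b hb).symm.trans (h'.neighbors_right b hb)

lemma eq_of_mem_left (h : IsCompleteComponent R Y Z A B) (h' : IsCompleteComponent R Y Z A' B')
    {a : α} (ha : a ∈ A) (ha' : a ∈ A') : A = A' := by
  obtain rfl : B = B' := (h.neighbors_left a ha).symm.trans (h'.neighbors_left a ha')
  exact h.eq_of_right_eq h'

lemma eq_of_mem_right (h : IsCompleteComponent R Y Z A B) (h' : IsCompleteComponent R Y Z A' B')
    {b : β} (hb : b ∈ B) (hb' : b ∈ B') : A = A' :=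
  (h.neighbors_right b hb).symm.trans (h'.neighbors_right b hb')

end IsCompleteComponent

lemma le_card_filter_not {γ : Type*} {s : Finset γ} {p : γ → Prop} [DecidablePred p] {n : ℕ}
    (hs : n + m ≤ #s) (hp : #{a ∈ s | p a} ≤ m) : n ≤ #{a ∈ s | ¬ p a} := by
  have := card_filter_add_card_filter_not (s := s) (fun a => p a)
  omega

lemma exists_complete_tripartite (R : α → α → Prop) [DecidableRel R]
    {X Y Z : Finset α} (hX : 3 ≤ #X) (hY : 4 ≤ #Y) (hZ : 4 ≤ #Z)
    (hXY : ∀ f ∈ X, #{g ∈ Y | R f g} ≤ 2) (hXZ : ∀ f ∈ X, #{h ∈ Z | R f h} ≤ 2)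
    (hYX : ∀ g ∈ Y, #{f ∈ X | R f g} ≤ 2) (hYZ : ∀ g ∈ Y, #{h ∈ Z | R g h} ≤ 2)
    (hZY : ∀ h ∈ Z, #{g ∈ Y | R g h} ≤ 2)
    (hno : ∀ f ∈ X, ∀ g ∈ Y, ∀ h ∈ Z, R f g ∨ R f h ∨ R g h) :
    ∃ A ⊆ X, ∃ B ⊆ Y, ∃ C ⊆ Z, #A = 2 ∧ #B = 2 ∧ #C = 2 ∧
      (∀ f ∈ A, ∀ g ∈ B, R f g) ∧ (∀ f ∈ A, ∀ h ∈ C, R f h) ∧ ∀ g ∈ B, ∀ h ∈ C, R g h := by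
  classical
  -- The non-neighbours of `f ∈ X` in `Y` and in `Z` form a complete component of the graph between
  -- `Y` and `Z`, to which every vertex of `X` with a different component is completely joined.
  let NY f := {g ∈ Y | ¬ R f g}
  let NZ f := {h ∈ Z | ¬ R f h}
  have hNY : ∀ f ∈ X, 2 ≤ #(NY f) := fun f hf => le_card_filter_not hY (hXY f hf)
  have hNZ : ∀ f ∈ X, 2 ≤ #(NZ f) := fun f hf => le_card_filter_not hZ (hXZ f hf)
  have component : ∀ f ∈ X, IsCompleteComponent R Y Z (NY f) (NZ f) := fun f hf =>
    isCompleteComponent_of_le_card (filter_subset _ _) (filter_subset _ _) two_pos (hNY f hf)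
      (hNZ f hf) hYZ hZY (by grind)
  have card_NY : ∀ f ∈ X, #(NY f) = 2 := fun f hf =>
    ((component f hf).card_left_le fun h hh => hZY h (mem_filter.1 hh).1).antisymm (hNY f hf)
  have card_NZ : ∀ f ∈ X, #(NZ f) = 2 := fun f hf =>
    ((component f hf).card_right_le fun g hg => hYZ g (mem_filter.1 hg).1).antisymm (hNZ f hf)
  have rel_NY : ∀ f ∈ X, ∀ c ∈ X, NY f ≠ NY c → ∀ g ∈ NY c, R f g := by
    intro f hf c hc hne g hg
    by_contra hfg
    exact hne ((component f hf).eq_of_mem_left (component c hc)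
      (mem_filter.2 ⟨(mem_filter.1 hg).1, hfg⟩) hg)
  have rel_NZ : ∀ f ∈ X, ∀ c ∈ X, NY f ≠ NY c → ∀ h ∈ NZ c, R f h := by
    intro f hf c hc hne h hh
    by_contra hfh
    exact hne ((component f hf).eq_of_mem_right (component c hc)
      (mem_filter.2 ⟨(mem_filter.1 hh).1, hfh⟩) hh)
  obtain ⟨a, ha, b, hb, c, hc, hab, hac, hbc⟩ :
      ∃ a ∈ X, ∃ b ∈ X, ∃ c ∈ X, a ≠ b ∧ NY a ≠ NY c ∧ NY b ≠ NY c := by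
    obtain ⟨a, ha, b, hb, c, hc, hab, hac, hbc⟩ := two_lt_card.1 hX
    have not_all_eq : ¬ (NY a = NY c ∧ NY b = NY c) := by
      rintro ⟨hac', hbc'⟩
      obtain ⟨g, hg, hgc⟩ := exists_mem_notMem_of_card_lt_card
        (show #(NY c) < #Y by have := card_NY c hc; omega)
      have hga : g ∉ NY a := hac' ▸ hgc
      have hgb : g ∉ NY b := hbc' ▸ hgc
      refine (hYX g hg).not_gt (two_lt_card.2 ⟨a, ?_, b, ?_, c, ?_, hab, hac, hbc⟩) <;> grind
    grind
  exact ⟨{a, b}, by grind, NY c, filter_subset _ _, NZ c, filter_subset _ _, card_pair hab,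
    card_NY c hc, card_NZ c hc, by grind, by grind, fun g hg h hh => (component c hc).rel hg hh⟩

end Biclique

section Linear

variable {V : Type*} [DecidableEq V] {r : ℕ} {E : Finset (Finset V)} {e f : Finset V} {p q v : V}

/-- The star of `v`: the edges of `E` through `v`, whose number is `degree E v`. -/
def edgesAt (E : Finset (Finset V)) (v : V) : Finset (Finset V) :=
  {g ∈ E | v ∈ g}

/-- The edges of `E` through `v` other than `e`: the candidates for the edge of a crown with
base `e` that meets the base in `v`. -/
def otherEdges (E : Finset (Finset V)) (e : Finset V) (v : V) : Finset (Finset V) :=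
  (edgesAt E v).erase e

lemma mem_edgesAt : e ∈ edgesAt E v ↔ e ∈ E ∧ v ∈ e :=
  mem_filter

lemma mem_otherEdges : f ∈ otherEdges E e v ↔ f ≠ e ∧ f ∈ E ∧ v ∈ f := by
  rw [otherEdges, mem_erase, mem_edgesAt]

lemma card_otherEdges_add_one (he : e ∈ E) (hv : v ∈ e) :
    #(otherEdges E e v) + 1 = degree E v :=
  card_erase_add_one (mem_edgesAt.2 ⟨he, hv⟩)

lemma IsLinear.eq_of_mem (hlin : IsLinear r E) (he : e ∈ E) (hf : f ∈ E) (hpq : p ≠ q)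
    (hpe : p ∈ e) (hqe : q ∈ e) (hpf : p ∈ f) (hqf : q ∈ f) : e = f := by
  by_contra hne
  exact hpq (card_le_one.1 (hlin.2 e he f hf hne) p (mem_inter.2 ⟨hpe, hpf⟩) q
    (mem_inter.2 ⟨hqe, hqf⟩))

lemma IsLinear.notMem_of_mem_otherEdges (hlin : IsLinear r E) (he : e ∈ E) (hp : p ∈ e)
    (hq : q ∈ e) (hpq : p ≠ q) (hf : f ∈ otherEdges E e p) : q ∉ f := by
  obtain ⟨hfe, hf, hpf⟩ := mem_otherEdges.1 hf
  exact fun hqf => hfe (hlin.eq_of_mem hf he hpq hpf hqf hp hq)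

lemma IsLinear.card_le_card_of_not_disjoint (hlin : IsLinear r E) {B : Finset (Finset V)}
    {T : Finset V} (hB : B ⊆ edgesAt E q) (hq : q ∉ T) (hT : ∀ g ∈ B, ¬ Disjoint T g) :
    #B ≤ #T := by
  refine card_le_card_of_forall_subsingleton (fun g u => u ∈ g)
    (fun g hg => not_disjoint_iff.1 (hT g hg)) fun u hu g hg g' hg' => ?_
  obtain ⟨hgE, hqg⟩ := mem_edgesAt.1 (hB hg.1)
  obtain ⟨hgE', hqg'⟩ := mem_edgesAt.1 (hB hg'.1)
  exact hlin.eq_of_mem hgE hgE' (ne_of_mem_of_not_mem hu hq) hg.2 hqg hg'.2 hqg'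

lemma IsLinear.card_otherEdges_meeting_le (hlin : IsLinear r E) (he : e ∈ E) (hp : p ∈ e)
    (hq : q ∈ e) (hpq : p ≠ q) (hf : f ∈ otherEdges E e p) :
    #{g ∈ otherEdges E e q | ¬ Disjoint f g} ≤ r - 1 := by
  obtain ⟨-, hfE, hpf⟩ := mem_otherEdges.1 hf
  have hqf := hlin.notMem_of_mem_otherEdges he hp hq hpq hf
  rw [← hlin.1 f hfE, ← card_erase_of_mem hpf]
  refine hlin.card_le_card_of_not_disjoint ((filter_subset _ _).trans (erase_subset _ _))
    (fun h => hqf (mem_of_mem_erase h)) fun g hg => ?_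
  obtain ⟨hg, hfg⟩ := mem_filter.1 hg
  rwa [disjoint_erase_comm,
    erase_eq_of_notMem (hlin.notMem_of_mem_otherEdges he hq hp hpq.symm hg)]

lemma IsLinear.hasCrown_of_disjoint (hlin : IsLinear r E) (he : e ∈ E) (v : Fin r → V)
    (hv : ∀ i, v i ∈ e) (f : Fin r → Finset V) (hf : ∀ i, f i ∈ otherEdges E e (v i))
    (hdisj : ∀ i j, i < j → Disjoint (f i) (f j)) : HasCrown r E := by
  simp only [mem_otherEdges] at hf
  refine ⟨e, he, f, fun i => (hf i).2.1, fun i => (hf i).1, fun i j hij => ?_, fun i => ?_⟩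
  · rw [← disjoint_iff_inter_eq_empty]
    exact hij.lt_or_gt.elim (hdisj i j) fun h => (hdisj j i h).symm
  · exact le_antisymm (hlin.2 e he _ (hf i).2.1 (hf i).1.symm)
      (card_pos.2 ⟨v i, mem_inter.2 ⟨hv i, (hf i).2.2⟩⟩)

lemma IsLinear.hasCrown_of_lt_degree (hlin : IsLinear r E) (he : e ∈ E) (v : Fin r → V)
    (hinj : Function.Injective v) (hv : ∀ i, v i ∈ e)
    (hdeg : ∀ i : Fin r, i * (r - 1) + 1 < degree E (v i)) : HasCrown r E := by
  obtain ⟨f, hf, hdisj⟩ := exists_independent_transversal (fun a b => ¬ Disjoint a b) (r - 1)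
    (fun i => otherEdges E e (v i))
    (fun i j hij a => hlin.card_otherEdges_meeting_le he (hv i) (hv j) (hinj.ne hij.ne))
    (fun i => by have := card_otherEdges_add_one he (hv i); have := hdeg i; omega)
  exact hlin.hasCrown_of_disjoint he v hv f hf fun i j hij => not_not.1 (hdisj i j hij)

lemma IsLinear.exists_subset_degree_le (hlin : IsLinear r E) (hfree : ¬ HasCrown r E)
    (he : e ∈ E) :
    ∃ i < r, ∃ S ⊆ e, #S = i + 1 ∧ ∀ v ∈ S, degree E v ≤ i * (r - 1) + 1 := by
  obtain ⟨v, hmono⟩ := exists_monotone_enumeration e (hlin.1 e he) (degree E)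
  have hinj : Function.Injective fun i => (v i : V) := Subtype.val_injective.comp v.injective
  obtain ⟨i, hi⟩ : ∃ i : Fin r, degree E (v i) ≤ i * (r - 1) + 1 := by
    by_contra! hdeg
    exact hfree (hlin.hasCrown_of_lt_degree he _ hinj (fun i => (v i).2) hdeg)
  refine ⟨i, i.2, (Iic i).image fun j => (v j : V), image_subset_iff.2 fun j _ => (v j).2, ?_, ?_⟩
  · rw [card_image_of_injective _ hinj, Fin.card_Iic]
  · exact forall_mem_image.2 fun j hj => (hmono (mem_Iic.1 hj)).trans hi

/-- The charge that `v` sends to the edge `e` when every vertex of degree less than `D` splits a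
unit charge evenly among its set `H v` of recipients, and the other vertices send nothing. -/
noncomputable def charge (E : Finset (Finset V)) (D : ℕ) (H : V → Finset (Finset V)) (v : V)
    (e : Finset V) : ℝ :=
  if degree E v < D ∧ e ∈ H v then (#(H v) : ℝ)⁻¹ else 0

variable {D k : ℕ} {H : V → Finset (Finset V)}

lemma charge_nonneg : 0 ≤ charge E D H v e := by
  unfold charge
  positivity

lemma inv_le_charge (hD : degree E v < D) (he : e ∈ H v) (hk : #(H v) ≤ k) :
    (k : ℝ)⁻¹ ≤ charge E D H v e := by
  rw [charge, if_pos ⟨hD, he⟩]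
  exact inv_anti₀ (by exact_mod_cast card_pos.2 ⟨e, he⟩) (by exact_mod_cast hk)

lemma card_mul_inv_le_sum_charge {S : Finset V} (hS : S ⊆ e)
    (h : ∀ v ∈ S, degree E v < D ∧ e ∈ H v ∧ #(H v) ≤ k) :
    #S * (k : ℝ)⁻¹ ≤ ∑ v ∈ e, charge E D H v e := by
  rw [← nsmul_eq_mul]
  refine (card_nsmul_le_sum S _ _ fun v hv => ?_).trans
    (sum_le_sum_of_subset_of_nonneg hS fun _ _ _ => charge_nonneg)
  obtain ⟨hD, he, hk⟩ := h v hv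
  exact inv_le_charge hD he hk

lemma sum_charge_le (s : Finset (Finset V)) :
    ∑ e ∈ s, charge E D H v e ≤ if degree E v < D then 1 else 0 := by
  by_cases hD : degree E v < D
  · simp only [charge, hD, true_and, if_true, ← sum_filter, sum_const, nsmul_eq_mul]
    refine (mul_le_mul_of_nonneg_right ?_ (by positivity)).trans
      (mul_inv_le_one (a := (#(H v) : ℝ)))
    exact_mod_cast card_le_card fun e he => (mem_filter.1 he).2
  · simp [charge, hD]

lemma mul_card_le_of_le_sum_charge [Fintype V] {c : ℝ}
    (hc : ∀ e ∈ E, c ≤ ∑ v ∈ e, charge E D H v e) :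
    c * #E ≤ #{v : V | degree E v < D} :=
  calc c * #E = ∑ _e ∈ E, c := by rw [sum_const, nsmul_eq_mul, mul_comm]
    _ ≤ ∑ e ∈ E, ∑ v ∈ e, charge E D H v e := sum_le_sum hc
    _ = ∑ v, ∑ e ∈ edgesAt E v, charge E D H v e := sum_comm' (by simp [mem_edgesAt])
    _ ≤ ∑ v, if degree E v < D then (1 : ℝ) else 0 := sum_le_sum fun _ _ => sum_charge_le _
    _ = #{v : V | degree E v < D} := by rw [sum_boole]

lemma IsLinear.le_sum_charge_of_four_le (hlin : IsLinear r E) (hfree : ¬ HasCrown r E)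
    (hr : 4 ≤ r) (he : e ∈ E) :
    ((r : ℝ) - 1) / (r * (r - 2)) ≤ ∑ v ∈ e, charge E ((r - 1) ^ 2 + 2) (edgesAt E) v e := by
  obtain ⟨i, hi, S, hS, hcard, hdeg⟩ := hlin.exists_subset_degree_le hfree he
  obtain ⟨m, rfl⟩ := Nat.exists_eq_add_of_le' hr
  rw [Nat.add_sub_assoc (by omega)] at hdeg ⊢
  have hsum := card_mul_inv_le_sum_charge (D := (m + 3) ^ 2 + 2) (H := edgesAt E) hS fun v hv =>
    ⟨(hdeg v hv).trans_lt (by nlinarith), mem_edgesAt.2 ⟨he, hS hv⟩, hdeg v hv⟩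
  refine le_trans ?_ hsum
  have hi' : (i : ℝ) ≤ m + 3 := by exact_mod_cast Nat.lt_succ_iff.1 hi
  rw [hcard, ← div_eq_mul_inv]
  push_cast
  rw [div_le_div_iff₀ (by ring_nf; positivity) (by positivity)]
  nlinarith

end Linear

section ThreeUniform

variable {V : Type*} [DecidableEq V] {E : Finset (Finset V)}

/-- The vertex set `P` carries a Fano plane all of whose lines are edges of `E`; this encoding
assumes that `E` is linear and three-uniform. -/
structure IsFanoPlane (E : Finset (Finset V)) (P : Finset V) : Prop where
  card_eq : #P = 7
  exists_line : ∀ u ∈ P, ∀ v ∈ P, u ≠ v → ∃ l ∈ E, l ⊆ P ∧ u ∈ l ∧ v ∈ l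

/-- The edges of `E` through `p` that are contained in `P`; for a Fano plane `P`, its lines
through `p`. -/
def linesAt (E : Finset (Finset V)) (P : Finset V) (p : V) : Finset (Finset V) :=
  {l ∈ edgesAt E p | l ⊆ P}

variable {r : ℕ} {P e f g k : Finset V} {A B C : Finset (Finset V)} {p q s u v w x y z : V}

lemma mem_linesAt : e ∈ linesAt E P p ↔ (e ∈ E ∧ p ∈ e) ∧ e ⊆ P := by
  rw [linesAt, mem_filter, mem_edgesAt]

lemma IsLinear.card_biUnion_erase (hlin : IsLinear r E) {L : Finset (Finset V)}
    (hL : L ⊆ edgesAt E p) : #(L.biUnion fun l => l.erase p) = #L * (r - 1) := by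
  have hmem : ∀ l ∈ L, l ∈ E ∧ p ∈ l := fun l hl => mem_edgesAt.1 (hL hl)
  rw [card_biUnion, sum_const_nat]
  · intro l hl
    rw [card_erase_of_mem (hmem l hl).2, hlin.1 l (hmem l hl).1]
  · intro l hl l' hl' hne
    refine disjoint_left.2 fun u hu hu' => hne ?_
    exact hlin.eq_of_mem (hmem l hl).1 (hmem l' hl').1 (mem_erase.1 hu).1 (mem_erase.1 hu).2
      (hmem l hl).2 (mem_erase.1 hu').2 (hmem l' hl').2

lemma linesAt_subset_edgesAt : linesAt E P p ⊆ edgesAt E p :=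
  filter_subset _ _

lemma biUnion_linesAt_subset : ((linesAt E P p).biUnion fun l => l.erase p) ⊆ P.erase p :=
  biUnion_subset.2 fun _ hl => erase_subset_erase p (mem_linesAt.1 hl).2

lemma IsFanoPlane.card_linesAt (hP : IsFanoPlane E P) (hlin : IsLinear 3 E) (hp : p ∈ P) :
    #(linesAt E P p) = 3 := by
  have hcover : ((linesAt E P p).biUnion fun l => l.erase p) = P.erase p := by
    refine biUnion_linesAt_subset.antisymm fun u hu => ?_
    obtain ⟨hup, huP⟩ := mem_erase.1 hu
    obtain ⟨l, hl, hlP, hul, hpl⟩ := hP.exists_line u huP p hp hup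
    exact mem_biUnion.2 ⟨l, mem_linesAt.2 ⟨⟨hl, hpl⟩, hlP⟩, mem_erase.2 ⟨hup, hul⟩⟩
  have hcard := hlin.card_biUnion_erase (linesAt_subset_edgesAt (P := P) (p := p))
  rw [hcover, card_erase_of_mem hp, hP.card_eq] at hcard
  omega

lemma isFanoPlane_of_three_le_card_linesAt (hlin : IsLinear 3 E) (hP : #P = 7)
    (h : ∀ p ∈ P, 3 ≤ #(linesAt E P p)) : IsFanoPlane E P := by
  refine ⟨hP, fun u hu v hv huv => ?_⟩
  have hcover : ((linesAt E P u).biUnion fun l => l.erase u) = P.erase u := by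
    refine eq_of_subset_of_card_le biUnion_linesAt_subset ?_
    rw [hlin.card_biUnion_erase linesAt_subset_edgesAt, card_erase_of_mem hu, hP]
    have := h u hu
    omega
  obtain ⟨l, hl, hvl⟩ := mem_biUnion.1 (hcover.symm ▸ mem_erase.2 ⟨huv.symm, hv⟩)
  obtain ⟨⟨hlE, hul⟩, hlP⟩ := mem_linesAt.1 hl
  exact ⟨l, hlE, hlP, hul, mem_of_mem_erase hvl⟩

/-- The edges of `E` through `p` that leave `P`. -/
def outerEdgesAt (E : Finset (Finset V)) (P : Finset V) (p : V) : Finset (Finset V) :=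
  {l ∈ edgesAt E p | ¬ l ⊆ P}

lemma mem_outerEdgesAt : e ∈ outerEdgesAt E P p ↔ (e ∈ E ∧ p ∈ e) ∧ ¬ e ⊆ P := by
  rw [outerEdgesAt, mem_filter, mem_edgesAt]

lemma outerEdgesAt_subset_edgesAt : outerEdgesAt E P p ⊆ edgesAt E p :=
  filter_subset _ _

lemma IsFanoPlane.card_outerEdgesAt_add_three (hP : IsFanoPlane E P) (hlin : IsLinear 3 E)
    (hp : p ∈ P) : #(outerEdgesAt E P p) + 3 = degree E p := by
  rw [← hP.card_linesAt hlin hp, add_comm]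
  exact card_filter_add_card_filter_not _

lemma IsFanoPlane.notMem_of_mem_outerEdgesAt (hP : IsFanoPlane E P) (hlin : IsLinear r E)
    (hp : p ∈ P) (hq : q ∈ P) (hpq : p ≠ q) (hg : g ∈ outerEdgesAt E P p) : q ∉ g := by
  intro hqg
  obtain ⟨⟨hgE, hpg⟩, hgP⟩ := mem_outerEdgesAt.1 hg
  obtain ⟨l, hl, hlP, hpl, hql⟩ := hP.exists_line p hp q hq hpq
  exact hgP (hlin.eq_of_mem hgE hl hpq hpg hqg hpl hql ▸ hlP)

/-- The disjoint edges would complete, together with a line crossing `pq` in a third point, a crown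
with base the line `pq`. -/
lemma IsFanoPlane.not_disjoint (hP : IsFanoPlane E P) (hlin : IsLinear 3 E)
    (hfree : ¬ HasCrown 3 E) (hp : p ∈ P) (hq : q ∈ P) (hpq : p ≠ q)
    (hg : g ∈ outerEdgesAt E P p) (hk : k ∈ outerEdgesAt E P q) : ¬ Disjoint g k := by
  intro hgk
  obtain ⟨⟨hgE, hpg⟩, hgP⟩ := mem_outerEdgesAt.1 hg
  obtain ⟨⟨hkE, hqk⟩, hkP⟩ := mem_outerEdgesAt.1 hk
  obtain ⟨b, hb, hbP, hpb, hqb⟩ := hP.exists_line p hp q hq hpq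
  obtain ⟨t, htb, ht⟩ : ∃ t ∈ b, t ∉ ({p, q} : Finset V) :=
    exists_mem_notMem_of_card_lt_card (by rw [hlin.1 b hb]; exact card_le_two.trans_lt (by simp))
  obtain ⟨u, huP, hub⟩ : ∃ u ∈ P, u ∉ b :=
    exists_mem_notMem_of_card_lt_card (by rw [hlin.1 b hb, hP.card_eq]; simp)
  obtain ⟨c, hc, hcP, htc, huc⟩ :=
    hP.exists_line t (hbP htb) u huP (ne_of_mem_of_not_mem htb hub)
  obtain ⟨htp, htq⟩ : t ≠ p ∧ t ≠ q := by simpa only [mem_insert, mem_singleton, not_or] using ht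
  have hbc : b ≠ c := fun h => hub (h ▸ huc)
  have hgb : g ≠ b := fun h => hgP (h ▸ hbP)
  have hkb : k ≠ b := fun h => hkP (h ▸ hbP)
  have hpc : p ∉ c := fun h => hbc (hlin.eq_of_mem hb hc htp htb hpb htc h)
  have hqc : q ∉ c := fun h => hbc (hlin.eq_of_mem hb hc htq htb hqb htc h)
  have hgc : Disjoint g c := disjoint_right.2 fun s hs =>
    hP.notMem_of_mem_outerEdgesAt hlin hp (hcP hs) (ne_of_mem_of_not_mem hs hpc).symm hg
  have hkc : Disjoint k c := disjoint_right.2 fun s hs =>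
    hP.notMem_of_mem_outerEdgesAt hlin hq (hcP hs) (ne_of_mem_of_not_mem hs hqc).symm hk
  refine hfree (hlin.hasCrown_of_disjoint hb ![p, q, t] ?_ ![g, k, c] ?_ ?_)
  · simp [Fin.forall_fin_succ, hpb, hqb, htb]
  · simp [Fin.forall_fin_succ, mem_otherEdges, *, hbc.symm]
  · simp [Fin.forall_fin_succ, hgk, hgc, hkc]

lemma IsLinear.exists_notMem_of_one_lt_card (hlin : IsLinear r E) (hB : B ⊆ edgesAt E p)
    (hcard : 1 < #B) (hs : s ≠ p) : ∃ g ∈ B, s ∉ g := by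
  obtain ⟨g, hg, h, hh, hne⟩ := one_lt_card.1 hcard
  by_contra! hs'
  obtain ⟨hgE, hpg⟩ := mem_edgesAt.1 (hB hg)
  obtain ⟨hhE, hph⟩ := mem_edgesAt.1 (hB hh)
  exact hne (hlin.eq_of_mem hgE hhE hs (hs' g hg) hpg (hs' h hh) hph)

lemma exists_common_mem_of_card_eq_three {α : Type*} {k g h : Finset α} {s t : α} (hk : #k = 3)
    (hs : s ∈ k) (ht : t ∈ k) (hst : s ≠ t) (hsg : s ∉ g) (htg : t ∉ g) (hsh : s ∉ h) (hth : t ∉ h)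
    (hkg : ¬ Disjoint k g) (hkh : ¬ Disjoint k h) : ∃ u ∈ k, u ∈ g ∧ u ∈ h := by
  classical
  obtain ⟨u, huk, hug⟩ := not_disjoint_iff.1 hkg
  obtain ⟨u', huk', huh⟩ := not_disjoint_iff.1 hkh
  have hcard : #((k.erase s).erase t) ≤ 1 := by
    rw [card_erase_of_mem (mem_erase.2 ⟨hst.symm, ht⟩), card_erase_of_mem hs, hk]
  obtain rfl : u = u' := card_le_one.1 hcard u (by grind) u' (by grind)
  exact ⟨u, huk, hug, huh⟩

/-- Take outer edges `k` at `w` and `f` at `x`, and outer edges at `y` and `z` that avoid `k ∩ f`.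
All four meet pairwise, so the last two share the third points of both `k` and `f`. -/
lemma IsFanoPlane.degree_le_three (hP : IsFanoPlane E P) (hlin : IsLinear 3 E)
    (hfree : ¬ HasCrown 3 E) (hw : w ∈ P) (hx : x ∈ P) (hy : y ∈ P) (hz : z ∈ P) (hwx : w ≠ x)
    (hwy : w ≠ y) (hwz : w ≠ z) (hxy : x ≠ y) (hxz : x ≠ z) (hyz : y ≠ z)
    (hdx : 4 ≤ degree E x) (hdy : 5 ≤ degree E y) (hdz : 5 ≤ degree E z) : degree E w ≤ 3 := by
  by_contra! hdw
  have card_outer : ∀ p ∈ P, #(outerEdgesAt E P p) + 3 = degree E p := fun p hp =>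
    hP.card_outerEdgesAt_add_three hlin hp
  have avoid : ∀ {p q l}, p ∈ P → q ∈ P → p ≠ q → l ∈ outerEdgesAt E P p → q ∉ l :=
    hP.notMem_of_mem_outerEdgesAt hlin
  have meet : ∀ {p q g k}, p ∈ P → q ∈ P → p ≠ q → g ∈ outerEdgesAt E P p →
      k ∈ outerEdgesAt E P q → ¬ Disjoint g k := hP.not_disjoint hlin hfree
  obtain ⟨k, hk⟩ : (outerEdgesAt E P w).Nonempty :=
    card_pos.1 (by have := card_outer w hw; omega)
  obtain ⟨f, hf⟩ : (outerEdgesAt E P x).Nonempty :=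
    card_pos.1 (by have := card_outer x hx; omega)
  obtain ⟨s, hsk, hsf⟩ := not_disjoint_iff.1 (meet hw hx hwx hk hf)
  obtain ⟨⟨hkE, hwk⟩, -⟩ := mem_outerEdgesAt.1 hk
  obtain ⟨⟨hfE, hxf⟩, -⟩ := mem_outerEdgesAt.1 hf
  obtain ⟨g, hg, hsg⟩ := hlin.exists_notMem_of_one_lt_card (outerEdgesAt_subset_edgesAt (P := P))
    (by have := card_outer y hy; omega) (ne_of_mem_of_not_mem hsk (avoid hw hy hwy hk))
  obtain ⟨h, hh, hsh⟩ := hlin.exists_notMem_of_one_lt_card (outerEdgesAt_subset_edgesAt (P := P))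
    (by have := card_outer z hz; omega) (ne_of_mem_of_not_mem hsk (avoid hw hz hwz hk))
  have hwf : w ∉ f := avoid hx hw hwx.symm hf
  have hxk : x ∉ k := avoid hw hx hwx hk
  obtain ⟨t, htk, htg, hth⟩ := exists_common_mem_of_card_eq_three (hlin.1 k hkE) hwk hsk
    (ne_of_mem_of_not_mem hsf hwf).symm (avoid hy hw hwy.symm hg) hsg (avoid hz hw hwz.symm hh) hsh
    (meet hw hy hwy hk hg) (meet hw hz hwz hk hh)
  obtain ⟨b, hbf, hbg, hbh⟩ := exists_common_mem_of_card_eq_three (hlin.1 f hfE) hxf hsf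
    (ne_of_mem_of_not_mem hsk hxk).symm (avoid hy hx hxy.symm hg) hsg (avoid hz hx hxz.symm hh) hsh
    (meet hx hy hxy hf hg) (meet hx hz hxz hf hh)
  have htb : t ≠ b := by
    rintro rfl
    have hst : s ≠ t := (ne_of_mem_of_not_mem htg hsg).symm
    exact hwf (hlin.eq_of_mem hkE hfE hst hsk htk hsf hbf ▸ hwk)
  obtain ⟨⟨hgE, hyg⟩, -⟩ := mem_outerEdgesAt.1 hg
  obtain ⟨⟨hhE, -⟩, -⟩ := mem_outerEdgesAt.1 hh
  exact avoid hz hy hyz.symm hh (hlin.eq_of_mem hgE hhE htb htg hbg hth hbh ▸ hyg)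

lemma IsLinear.subset_union_biUnion (hlin : IsLinear r E) (hx : x ∈ e) (hy : y ∈ e) (hxy : x ≠ y)
    (he : e ∈ E) (hA : A ⊆ otherEdges E e x) (hcard : r - 1 ≤ #A) (hk : k ∈ otherEdges E e y)
    (hmeet : ∀ f ∈ A, ¬ Disjoint k f) : k ⊆ e ∪ A.biUnion id := by
  intro u huk
  obtain ⟨-, hkE, hyk⟩ := mem_otherEdges.1 hk
  obtain rfl | huy := eq_or_ne u y
  · exact mem_union_left _ hy
  refine mem_union_right _ (by_contra fun hu => ?_)
  have huA : ∀ f ∈ A, u ∉ f := fun f hf huf => hu (mem_biUnion.2 ⟨f, hf, huf⟩)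
  have hyA : ∀ f ∈ A, y ∉ f := fun f hf =>
    hlin.notMem_of_mem_otherEdges he hx hy hxy (hA hf)
  have hxk : x ∉ k := hlin.notMem_of_mem_otherEdges he hy hx hxy.symm hk
  have hmeet' : ∀ f ∈ A, ¬ Disjoint ((k.erase y).erase u) f := fun f hf => by
    rw [disjoint_erase_comm, erase_eq_of_notMem (huA f hf), disjoint_erase_comm,
      erase_eq_of_notMem (hyA f hf)]
    exact hmeet f hf
  have hle := hlin.card_le_card_of_not_disjoint (hA.trans (erase_subset _ _))
    (fun h => hxk (mem_of_mem_erase (mem_of_mem_erase h))) hmeet'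
  have hlt := card_erase_lt_of_mem (mem_erase.2 ⟨huy, huk⟩)
  rw [card_erase_of_mem hyk, hlin.1 k hkE] at hlt
  exact (hcard.trans hle).not_gt hlt

lemma IsLinear.union_biUnion_eq (hlin : IsLinear r E) (he : e ∈ E) (hx : x ∈ e) (hy : y ∈ e)
    (hxy : x ≠ y) (hA : A ⊆ otherEdges E e x) (hB : B ⊆ otherEdges E e y) (hcA : r - 1 ≤ #A)
    (hcB : r - 1 ≤ #B) (hmeet : ∀ f ∈ A, ∀ g ∈ B, ¬ Disjoint f g) :
    e ∪ A.biUnion id = e ∪ B.biUnion id := by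
  refine subset_antisymm (union_subset subset_union_left (biUnion_subset.2 fun f hf => ?_))
    (union_subset subset_union_left (biUnion_subset.2 fun g hg => ?_))
  · exact hlin.subset_union_biUnion hy hx hxy.symm he hB hcB (hA hf) (hmeet f hf)
  · exact hlin.subset_union_biUnion hx hy hxy he hA hcA (hB hg) fun f hf =>
      fun h => hmeet f hf g hg h.symm

lemma insert_subset_edgesAt (he : e ∈ E) (hx : x ∈ e) (hA : A ⊆ otherEdges E e x) :
    insert e A ⊆ edgesAt E x :=
  insert_subset (mem_edgesAt.2 ⟨he, hx⟩) (hA.trans (erase_subset _ _))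

lemma card_insert_of_subset_otherEdges (hA : A ⊆ otherEdges E e x) : #(insert e A) = #A + 1 :=
  card_insert_of_notMem fun h => (mem_otherEdges.1 (hA h)).1 rfl

lemma IsLinear.card_union_biUnion (hlin : IsLinear r E) (he : e ∈ E) (hx : x ∈ e)
    (hA : A ⊆ otherEdges E e x) : #(e ∪ A.biUnion id) = (#A + 1) * (r - 1) + 1 := by
  have herase : (e ∪ A.biUnion id).erase x = (insert e A).biUnion fun l => l.erase x := by
    ext u
    simp only [mem_erase, mem_union, mem_biUnion, id, mem_insert, exists_eq_or_imp]
    tauto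
  rw [← card_erase_add_one (mem_union_left _ hx), herase,
    hlin.card_biUnion_erase (insert_subset_edgesAt he hx hA), card_insert_of_subset_otherEdges hA]

lemma card_add_one_le_card_linesAt (he : e ∈ E) (hx : x ∈ e) (hA : A ⊆ otherEdges E e x) :
    #A + 1 ≤ #(linesAt E (e ∪ A.biUnion id) x) := by
  rw [← card_insert_of_subset_otherEdges hA]
  refine card_le_card fun l hl => mem_filter.2 ⟨insert_subset_edgesAt he hx hA hl, ?_⟩
  obtain rfl | hl := mem_insert.1 hl
  · exact subset_union_left
  · exact (subset_biUnion_of_mem id hl).trans subset_union_right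

lemma exists_mem_linesAt_union_biUnion (hA : A ⊆ otherEdges E e x) (hu : u ∈ e ∪ A.biUnion id)
    (hue : u ∉ e) : ∃ l ∈ linesAt E (e ∪ A.biUnion id) u, l ∈ A := by
  obtain ⟨l, hl, hul⟩ := mem_biUnion.1 ((mem_union.1 hu).resolve_left hue)
  exact ⟨l, mem_linesAt.2 ⟨⟨(mem_otherEdges.1 (hA hl)).2.1, hul⟩,
    (subset_biUnion_of_mem id hl).trans subset_union_right⟩, hl⟩

lemma IsLinear.isFanoPlane_union_biUnion (hlin : IsLinear 3 E) (he : e ∈ E) (hx : x ∈ e)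
    (hy : y ∈ e) (hz : z ∈ e) (hxy : x ≠ y) (hxz : x ≠ z) (hyz : y ≠ z)
    (hA : A ⊆ otherEdges E e x) (hB : B ⊆ otherEdges E e y) (hC : C ⊆ otherEdges E e z)
    (hcA : #A = 2) (hcB : #B = 2) (hcC : #C = 2) (hAB : ∀ f ∈ A, ∀ g ∈ B, ¬ Disjoint f g)
    (hAC : ∀ f ∈ A, ∀ h ∈ C, ¬ Disjoint f h) : IsFanoPlane E (e ∪ A.biUnion id) := by
  have hPB := hlin.union_biUnion_eq he hx hy hxy hA hB hcA.ge hcB.ge hAB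
  have hPC := hlin.union_biUnion_eq he hx hz hxz hA hC hcA.ge hcC.ge hAC
  refine isFanoPlane_of_three_le_card_linesAt hlin
    (by rw [hlin.card_union_biUnion he hx hA, hcA]) fun u hu => ?_
  by_cases hue : u ∈ e
  · have heq : ({x, y, z} : Finset V) = e := eq_of_subset_of_card_le (by grind)
      (by rw [hlin.1 e he, card_eq_three.2 ⟨x, y, z, hxy, hxz, hyz, rfl⟩])
    simp only [← heq, mem_insert, mem_singleton] at hue
    rcases hue with rfl | rfl | rfl
    · simpa only [hcA] using card_add_one_le_card_linesAt he hx hA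
    · simpa only [hcB, ← hPB] using card_add_one_le_card_linesAt he hy hB
    · simpa only [hcC, ← hPC] using card_add_one_le_card_linesAt he hz hC
  · obtain ⟨f, hf, hfA⟩ := exists_mem_linesAt_union_biUnion hA hu hue
    obtain ⟨g, hg, hgB⟩ := exists_mem_linesAt_union_biUnion hB (hPB ▸ hu) hue
    obtain ⟨h, hh, hhC⟩ := exists_mem_linesAt_union_biUnion hC (hPC ▸ hu) hue
    rw [← hPB] at hg
    rw [← hPC] at hh
    have avoid : ∀ {p q l}, p ∈ e → q ∈ e → p ≠ q → l ∈ otherEdges E e p → q ∉ l :=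
      hlin.notMem_of_mem_otherEdges he
    have hyg := (mem_otherEdges.1 (hB hgB)).2.2
    have hzh := (mem_otherEdges.1 (hC hhC)).2.2
    exact two_lt_card.2 ⟨f, hf, g, hg, h, hh,
      (ne_of_mem_of_not_mem' hyg (avoid hx hy hxy (hA hfA))).symm,
      (ne_of_mem_of_not_mem' hzh (avoid hx hz hxz (hA hfA))).symm,
      (ne_of_mem_of_not_mem' hzh (avoid hy hz hyz (hB hgB))).symm⟩

lemma IsLinear.exists_isFanoPlane (hlin : IsLinear 3 E) (hfree : ¬ HasCrown 3 E) (he : e ∈ E)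
    (hx : x ∈ e) (hy : y ∈ e) (hz : z ∈ e) (hxy : x ≠ y) (hxz : x ≠ z) (hyz : y ≠ z)
    (hdx : 4 ≤ degree E x) (hdy : 5 ≤ degree E y) (hdz : 5 ≤ degree E z) :
    ∃ P, IsFanoPlane E P ∧ e ⊆ P := by
  have meeting_le : ∀ {p q}, p ∈ e → q ∈ e → p ≠ q → ∀ f ∈ otherEdges E e p,
      #{g ∈ otherEdges E e q | ¬ Disjoint f g} ≤ 2 := fun hp hq hpq _ hf =>
    hlin.card_otherEdges_meeting_le he hp hq hpq hf
  have meeting_le' : ∀ {p q}, p ∈ e → q ∈ e → p ≠ q → ∀ f ∈ otherEdges E e p,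
      #{g ∈ otherEdges E e q | ¬ Disjoint g f} ≤ 2 := fun hp hq hpq f hf => by
    simpa only [disjoint_comm] using meeting_le hp hq hpq f hf
  have card_add_one : ∀ {p}, p ∈ e → #(otherEdges E e p) + 1 = degree E p :=
    card_otherEdges_add_one he
  have no_transversal : ∀ f ∈ otherEdges E e x, ∀ g ∈ otherEdges E e y, ∀ h ∈ otherEdges E e z,
      ¬ Disjoint f g ∨ ¬ Disjoint f h ∨ ¬ Disjoint g h := by
    intro f hf g hg h hh
    by_contra! hdisj
    exact hfree (hlin.hasCrown_of_disjoint he ![x, y, z] (by simp [Fin.forall_fin_succ, hx, hy, hz])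
      ![f, g, h] (by simp [Fin.forall_fin_succ, hf, hg, hh])
      (by simp [Fin.forall_fin_succ, hdisj]))
  obtain ⟨A, hA, B, hB, C, hC, hcA, hcB, hcC, hAB, hAC, -⟩ :=
    exists_complete_tripartite (fun f g : Finset V => ¬ Disjoint f g)
      (by have := card_add_one hx; omega) (by have := card_add_one hy; omega)
      (by have := card_add_one hz; omega) (meeting_le hx hy hxy) (meeting_le hx hz hxz)
      (meeting_le' hy hx hxy.symm) (meeting_le hy hz hyz) (meeting_le' hz hy hyz.symm)
      no_transversal
  exact ⟨_, hlin.isFanoPlane_union_biUnion he hx hy hz hxy hxz hyz hA hB hC hcA hcB hcC hAB hAC,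
    subset_union_left⟩

/-- The edge `g` is light at its vertex `v` when `v` is its only vertex of degree at least four. The
other vertices then pay enough for `g`, so that `v` can save its charge for its other edges. -/
def IsLight (E : Finset (Finset V)) (v : V) (g : Finset V) : Prop :=
  4 ≤ degree E v ∧ ∀ w ∈ g, w ≠ v → degree E w ≤ 3

instance (E : Finset (Finset V)) (v : V) : DecidablePred (IsLight E v) := fun g =>
  inferInstanceAs (Decidable (4 ≤ degree E v ∧ ∀ w ∈ g, w ≠ v → degree E w ≤ 3))

/-- The edges of `E` through `v` that are not light at `v`: the recipients of the charge of `v` in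
the three-uniform case. -/
def heavyEdges (E : Finset (Finset V)) (v : V) : Finset (Finset V) :=
  {g ∈ edgesAt E v | ¬ IsLight E v g}

lemma mem_heavyEdges : e ∈ heavyEdges E v ↔ (e ∈ E ∧ v ∈ e) ∧ ¬ IsLight E v e := by
  rw [heavyEdges, mem_filter, mem_edgesAt]

lemma card_heavyEdges_le_degree : #(heavyEdges E v) ≤ degree E v :=
  card_le_card (filter_subset _ _)

lemma IsFanoPlane.isLight (hP : IsFanoPlane E P) (hlin : IsLinear 3 E) (hfree : ¬ HasCrown 3 E)
    (he : e ∈ E) (heP : e ⊆ P) (hx : x ∈ e) (hy : y ∈ e) (hz : z ∈ e) (hxy : x ≠ y) (hxz : x ≠ z)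
    (hyz : y ≠ z) (hdx : 4 ≤ degree E x) (hdy : 5 ≤ degree E y) (hdz : 5 ≤ degree E z)
    (hg : g ∈ linesAt E P y) (hge : g ≠ e) : IsLight E y g := by
  obtain ⟨⟨hgE, hyg⟩, hgP⟩ := mem_linesAt.1 hg
  have avoid : ∀ q ∈ e, y ≠ q → q ∉ g := fun q hq hyq =>
    hlin.notMem_of_mem_otherEdges he hy hq hyq (mem_otherEdges.2 ⟨hge, hgE, hyg⟩)
  refine ⟨by omega, fun w hw hwy => ?_⟩
  exact hP.degree_le_three hlin hfree (hgP hw) (heP hx) (heP hy) (heP hz)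
    (ne_of_mem_of_not_mem hw (avoid x hx hxy.symm)) hwy
    (ne_of_mem_of_not_mem hw (avoid z hz hyz)) hxy hxz hyz hdx hdy hdz

lemma IsLinear.card_heavyEdges_le_three (hlin : IsLinear 3 E) (hfree : ¬ HasCrown 3 E)
    (he : e ∈ E) (hx : x ∈ e) (hy : y ∈ e) (hz : z ∈ e) (hxy : x ≠ y) (hxz : x ≠ z) (hyz : y ≠ z)
    (hdx : 4 ≤ degree E x) (hdy : degree E y = 5) (hdz : 5 ≤ degree E z) :
    #(heavyEdges E y) ≤ 3 := by
  obtain ⟨P, hP, heP⟩ := hlin.exists_isFanoPlane hfree he hx hy hz hxy hxz hyz hdx hdy.ge hdz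
  have hsub : heavyEdges E y ⊆ insert e (outerEdgesAt E P y) := by
    intro g hg
    obtain ⟨hgE, hlight⟩ := mem_heavyEdges.1 hg
    by_contra! hg'
    rw [mem_insert, mem_outerEdgesAt, not_or, not_and_not_right] at hg'
    exact hlight (hP.isLight hlin hfree he heP hx hy hz hxy hxz hyz hdx hdy.ge hdz
      (mem_linesAt.2 ⟨hgE, hg'.2 hgE⟩) hg'.1)
  have hcard := hP.card_outerEdgesAt_add_three hlin (heP hy)
  have := (card_le_card hsub).trans (card_insert_le _ _)
  omega

lemma two_thirds_le_sum_charge_of_isLight (he : e ∈ E) (hcard : #e = 3) (hv : v ∈ e)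
    (hlight : IsLight E v e) : (2 : ℝ) / 3 ≤ ∑ w ∈ e, charge E 6 (heavyEdges E) w e := by
  have hsum := card_mul_inv_le_sum_charge (E := E) (D := 6) (H := heavyEdges E) (k := 3)
    (erase_subset v e) fun w hw => by
      obtain ⟨hwv, hwe⟩ := mem_erase.1 hw
      have hdw : degree E w ≤ 3 := hlight.2 w hwe hwv
      exact ⟨by omega, mem_heavyEdges.2 ⟨⟨he, hwe⟩, fun h => by have := h.1; omega⟩,
        card_heavyEdges_le_degree.trans hdw⟩
  rw [card_erase_of_mem hv, hcard] at hsum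
  norm_num at hsum ⊢
  exact hsum

lemma IsLinear.two_thirds_le_sum_charge_of_degree_le_five (hlin : IsLinear 3 E)
    (hfree : ¬ HasCrown 3 E) (he : e ∈ E) (hdeg : ∀ v ∈ e, degree E v ≤ 5)
    (hheavy : ∀ v ∈ e, e ∈ heavyEdges E v) :
    (2 : ℝ) / 3 ≤ ∑ v ∈ e, charge E 6 (heavyEdges E) v e := by
  obtain ⟨v, hmono⟩ := exists_monotone_enumeration e (hlin.1 e he) (degree E)
  have hsum : ∑ u ∈ e, charge E 6 (heavyEdges E) u e = charge E 6 (heavyEdges E) (v 0) e +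
      charge E 6 (heavyEdges E) (v 1) e + charge E 6 (heavyEdges E) (v 2) e := by
    rw [← sum_coe_sort, ← v.sum_comp, Fin.sum_univ_three]
  have inv_le : ∀ i k, #(heavyEdges E (v i)) ≤ k →
      (k : ℝ)⁻¹ ≤ charge E 6 (heavyEdges E) (v i) e := fun i k hk =>
    inv_le_charge (Nat.lt_succ_of_le (hdeg _ (v i).2)) (hheavy _ (v i).2) hk
  have inv_le_of_degree : ∀ i k, degree E (v i) ≤ k →
      (k : ℝ)⁻¹ ≤ charge E 6 (heavyEdges E) (v i) e := fun i k hk =>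
    inv_le i k (card_heavyEdges_le_degree.trans hk)
  have h₁₂ : degree E (v 1) ≤ degree E (v 2) := hmono (by decide)
  have h₀₁ : degree E (v 0) ≤ degree E (v 1) := hmono (by decide)
  have h₀ := hdeg _ (v 0).2
  have h₁ := hdeg _ (v 1).2
  have h₂ := hdeg _ (v 2).2
  rw [hsum]
  by_cases hd₀ : degree E (v 0) ≤ 3
  · linarith [inv_le_of_degree 0 3 hd₀, inv_le_of_degree 1 5 h₁, inv_le_of_degree 2 5 h₂]
  by_cases hd₁ : degree E (v 1) ≤ 4
  · linarith [inv_le_of_degree 0 4 (h₀₁.trans hd₁), inv_le_of_degree 1 4 hd₁,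
      inv_le_of_degree 2 5 h₂]
  have hne : ∀ {i j}, i ≠ j → (v i : V) ≠ v j := fun hij h => hij (v.injective (Subtype.ext h))
  have hc₁ : #(heavyEdges E (v 1)) ≤ 3 :=
    hlin.card_heavyEdges_le_three hfree he (v 0).2 (v 1).2 (v 2).2 (hne (by decide))
      (hne (by decide)) (hne (by decide)) (by omega) (by omega) (by omega)
  have hc₂ : #(heavyEdges E (v 2)) ≤ 3 :=
    hlin.card_heavyEdges_le_three hfree he (v 0).2 (v 2).2 (v 1).2 (hne (by decide))
      (hne (by decide)) (hne (by decide)) (by omega) (by omega) (by omega)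
  linarith [inv_le 1 3 hc₁, inv_le 2 3 hc₂, charge_nonneg (E := E) (D := 6) (H := heavyEdges E)
    (v := v 0) (e := e)]

lemma IsLinear.two_thirds_le_sum_charge (hlin : IsLinear 3 E) (hfree : ¬ HasCrown 3 E)
    (he : e ∈ E) : (2 : ℝ) / 3 ≤ ∑ v ∈ e, charge E 6 (heavyEdges E) v e := by
  by_cases hlight : ∃ v ∈ e, IsLight E v e
  · obtain ⟨v, hv, hlight⟩ := hlight
    exact two_thirds_le_sum_charge_of_isLight he (hlin.1 e he) hv hlight
  have hheavy : ∀ v ∈ e, e ∈ heavyEdges E v := fun v hv =>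
    mem_heavyEdges.2 ⟨⟨he, hv⟩, fun h => hlight ⟨v, hv, h⟩⟩
  obtain ⟨i, hi, S, hS, hcard, hdeg⟩ := hlin.exists_subset_degree_le hfree he
  have hsum := card_mul_inv_le_sum_charge (E := E) (D := 6) (H := heavyEdges E) hS fun v hv =>
    ⟨by have := hdeg v hv; omega, hheavy v (hS hv), card_heavyEdges_le_degree.trans (hdeg v hv)⟩
  rw [hcard] at hsum
  interval_cases i
  · norm_num at hsum
    linarith
  · norm_num at hsum
    linarith
  · obtain rfl : S = e := eq_of_subset_of_card_le hS (by rw [hlin.1 e he, hcard])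
    exact hlin.two_thirds_le_sum_charge_of_degree_le_five hfree he hdeg hheavy

end ThreeUniform

theorem crown_cstar_free_upper_bound_general {V : Type*} [DecidableEq V] [Fintype V]
    (r : ℕ) (hr : 3 ≤ r) (E : Finset (Finset V)) (hlin : IsLinear r E) (hfree : ¬ HasCrown r E) :
    (#E : ℝ) ≤ r * (r - 2) * ((Fintype.card V : ℝ) - #{v : V | (r - 1) ^ 2 + 2 ≤ degree E v}) /
      (r - 1) := by
  obtain ⟨H, hH⟩ : ∃ H : V → Finset (Finset V), ∀ e ∈ E,
      ((r : ℝ) - 1) / (r * (r - 2)) ≤ ∑ v ∈ e, charge E ((r - 1) ^ 2 + 2) H v e := by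
    obtain rfl | hr := hr.eq_or_lt
    · exact ⟨heavyEdges E, fun e he =>
        le_of_eq_of_le (by norm_num) (hlin.two_thirds_le_sum_charge hfree he)⟩
    · exact ⟨edgesAt E, fun e he => hlin.le_sum_charge_of_four_le hfree hr he⟩
  have hcount : #{v : V | (r - 1) ^ 2 + 2 ≤ degree E v} +
      #{v : V | degree E v < (r - 1) ^ 2 + 2} = Fintype.card V := by
    simp only [← not_le]
    exact card_filter_add_card_filter_not _
  have hr' : (3 : ℝ) ≤ r := by exact_mod_cast hr
  have hbound := mul_card_le_of_le_sum_charge hH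
  rw [div_mul_eq_mul_div, div_le_iff₀ (by nlinarith)] at hbound
  rw [← hcount, le_div_iff₀ (by linarith)]
  push_cast
  linarith

/-- Main theorem: a `{C_{1r}, C*}`-free linear `r`-graph on `n` vertices with `s`
vertices of degree at least `(r-1)^2 + 2` has at most `r(r-2)(n-s)/(r-1)` edges. -/
theorem crown_cstar_free_upper_bound {V : Type*} [DecidableEq V] [Fintype V]
    (r : ℕ) (hr : 3 ≤ r) (E : Finset (Finset V)) (hlin : IsLinear r E)
    (hfree₁ : ¬ HasCrown r E) (hfree₂ : ¬ HasCStar r E)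
    (s : ℕ) (hs : s = (Finset.univ.filter (fun v : V => (r - 1) ^ 2 + 2 ≤ degree E v)).card) :
    (E.card : ℝ) ≤ r * (r - 2) * ((Fintype.card V : ℝ) - s) / (r - 1) := by
  subst hs
  exact crown_cstar_free_upper_bound_general r hr E hlin hfree₁
end

section
/- For every integer r ≥ 3 and all sufficiently large n with r - 1 a prime power, ex_r^{lin}(n, {C_{1r}, C*}) ≥ r(r-1)⌊(n-r)/(r-1)^2⌋ and ex_r^{lin}(n, {C_{1r}, C*}) ≤ r(r-2)n/(r-1). -/
open Finset

/-!
Upper bound. Choosing edges greedily through the vertices of an edge `e`, in order of increasing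
degree, produces a crown unless some nonempty `s ⊆ e` has all degrees at most
`(#s - 1) (r - 1) + 1`. For `r ≥ 4` this gives `∑ v ∈ e, 1 / deg v ≥ (r - 1) / (r (r - 2))`, and
summing over all edges counts every vertex at most once. For `r = 3` the estimate fails only if the
degrees on `e` are `(4, 5, 5)` or `(5, 5, 5)`. Then the links of the vertices of `e` contain two
disjoint `4`-cycles, and every edge disjoint from `e` avoids both. Deleting the `11` vertices of
`e` and the cycles destroys only the edges meeting `e`, at most `15 ≤ 11 · 3 / 2`, and induction
applies.

Lower bound. Glue copies of a projective plane of order `r - 1` along a line `ℓ` and remove `ℓ`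
itself. Lines of the same copy meet, and a line `l` meets lines of other copies only in the point
`l ∩ ℓ`, so no edge meets three pairwise disjoint edges, whereas `C_{1r}` and `C*` both contain
such a configuration.
-/

section PartialCrown

variable {V : Type*} [DecidableEq V] {r : ℕ} {E : Finset (Finset V)} {e : Finset V}

namespace IsLinear

lemma mono {E' : Finset (Finset V)} (h : IsLinear r E) (hE : E' ⊆ E) : IsLinear r E' :=
  ⟨fun e he => h.1 e (hE he), fun e he f hf => h.2 e (hE he) f (hE hf)⟩

lemma eq_of_mem_s17 (h : IsLinear r E) {f : Finset V} (he : e ∈ E) (hf : f ∈ E) {x y : V}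
    (hxy : x ≠ y) (hxe : x ∈ e) (hye : y ∈ e) (hxf : x ∈ f) (hyf : y ∈ f) : e = f := by
  by_contra hne
  exact hxy (card_le_one.1 (h.2 e he f hf hne) x (mem_inter.2 ⟨hxe, hxf⟩) y
    (mem_inter.2 ⟨hye, hyf⟩))

lemma hasCrown (h : IsLinear r E) (he : e ∈ E) {f : Fin r → Finset V} (hf : ∀ i, f i ∈ E)
    (hfe : ∀ i, f i ≠ e) (hdisj : Pairwise (Function.onFun Disjoint f))
    (hmeet : ∀ i, ∃ v ∈ e, v ∈ f i) : HasCrown r E := by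
  refine ⟨e, he, f, hf, hfe, fun i j hij => disjoint_iff_inter_eq_empty.1 (hdisj hij), fun i => ?_⟩
  obtain ⟨v, hve, hvf⟩ := hmeet i
  exact le_antisymm (h.2 e he _ (hf i) (hfe i).symm) (card_pos.2 ⟨v, mem_inter.2 ⟨hve, hvf⟩⟩)

lemma exists_edge_disjoint (h : IsLinear r E) (e : Finset V) {v : V} {X : Finset V}
    (hv : v ∉ X) (hX : X.card + 1 < degree E v) : ∃ g ∈ E, v ∈ g ∧ g ≠ e ∧ Disjoint g X := by
  by_contra! hmeet
  have hle : ((E.filter (v ∈ ·)).erase e).card ≤ X.card := by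
    refine card_le_card_of_forall_subsingleton (fun g x => x ∈ g) (fun g hg => ?_)
      fun x hx f hf g hg => ?_
    · obtain ⟨hge, hgE, hvg⟩ : g ≠ e ∧ g ∈ E ∧ v ∈ g := by simpa using hg
      obtain ⟨x, hxg, hxX⟩ := not_disjoint_iff.1 (hmeet g hgE hvg hge)
      exact ⟨x, hxX, hxg⟩
    · obtain ⟨⟨-, hfE, hvf⟩, hxf⟩ : (f ≠ e ∧ f ∈ E ∧ v ∈ f) ∧ x ∈ f := by simpa using hf
      obtain ⟨⟨-, hgE, hvg⟩, hxg⟩ : (g ≠ e ∧ g ∈ E ∧ v ∈ g) ∧ x ∈ g := by simpa using hg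
      exact h.eq_of_mem_s17 hfE hgE (ne_of_mem_of_not_mem hx hv).symm hvf hxf hvg hxg
  have := pred_card_le_card_erase (s := E.filter (v ∈ ·)) (a := e)
  rw [degree] at hX
  omega

end IsLinear

lemma HasCrown.mono {E' : Finset (Finset V)} (h : HasCrown r E') (hE : E' ⊆ E) :
    HasCrown r E := by
  obtain ⟨e, he, f, hf, h⟩ := h
  exact ⟨e, hE he, f, fun i => hE (hf i), h⟩

/-- Pairwise disjoint edges `f v ≠ e`, one through each `v ∈ t`. For an edge `e` and `t = e` they
form a crown with base `e`. -/
structure IsPartialCrown (E : Finset (Finset V)) (e t : Finset V) (f : V → Finset V) : Prop where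
  mem : ∀ v ∈ t, f v ∈ E
  ne : ∀ v ∈ t, f v ≠ e
  self_mem : ∀ v ∈ t, v ∈ f v
  disjoint : ∀ u ∈ t, ∀ v ∈ t, u ≠ v → Disjoint (f u) (f v)

namespace IsPartialCrown

variable {t : Finset V} {f : V → Finset V} {v : V}

lemma hasCrown (hf : IsPartialCrown E e e f) (h : IsLinear r E) (he : e ∈ E) :
    HasCrown r E := by
  let φ := (equivFinOfCardEq (h.1 e he)).symm
  refine h.hasCrown (f := fun i => f (φ i)) he (fun i => hf.mem _ (φ i).2)
    (fun i => hf.ne _ (φ i).2) (fun i j hij => hf.disjoint _ (φ i).2 _ (φ j).2 ?_)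
    fun i => ⟨φ i, (φ i).2, hf.self_mem _ (φ i).2⟩
  exact fun hφ => hij (φ.injective (Subtype.ext hφ))

lemma update (hf : IsPartialCrown E e (t.erase v) f) {g : Finset V} (hg : g ∈ E) (hvg : v ∈ g)
    (hge : g ≠ e) (hgf : ∀ u ∈ t.erase v, Disjoint g (f u)) :
    IsPartialCrown E e t (Function.update f v g) := by
  obtain ⟨hmem, hne, hself, hdisj⟩ := hf
  constructor <;> simp only [mem_erase, Function.update_apply] at * <;>
    grind

lemma exists_disjoint_edge (hf : IsPartialCrown E e t f) (h : IsLinear r E) (he : e ∈ E)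
    (hte : t ⊆ e) (hve : v ∈ e) (hvt : v ∉ t) (hdeg : t.card * (r - 1) + 1 < degree E v) :
    ∃ g ∈ E, v ∈ g ∧ g ≠ e ∧ ∀ u ∈ t, Disjoint g (f u) := by
  set X := t.biUnion fun u => (f u).erase u with hX
  have hXcard : X.card ≤ t.card * (r - 1) := card_biUnion_le_card_mul _ _ _ fun u hu => by
    rw [card_erase_of_mem (hf.self_mem u hu), h.1 _ (hf.mem u hu)]
  have hvX : v ∉ X := by
    simp only [hX, mem_biUnion, mem_erase, not_exists, not_and]
    exact fun u hu hvu hvf => hf.ne u hu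
      (h.eq_of_mem_s17 (hf.mem u hu) he hvu hvf (hf.self_mem u hu) hve (hte hu))
  obtain ⟨g, hg, hvg, hge, hgX⟩ := h.exists_edge_disjoint e hvX (by omega)
  refine ⟨g, hg, hvg, hge, fun u hu => disjoint_left.2 fun x hxg hxf => ?_⟩
  by_cases hxu : x = u
  · subst hxu
    exact hge (h.eq_of_mem_s17 hg he (ne_of_mem_of_not_mem hu hvt) hxg hvg (hte hu) hve)
  · exact disjoint_left.1 hgX hxg (mem_biUnion.2 ⟨u, hu, mem_erase.2 ⟨hxu, hxf⟩⟩)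

end IsPartialCrown

lemma IsLinear.exists_isPartialCrown (h : IsLinear r E) (he : e ∈ E) {t : Finset V} (hte : t ⊆ e)
    (hdeg : ∀ s ⊆ t, s.Nonempty → ∃ v ∈ s, (s.card - 1) * (r - 1) + 1 < degree E v) :
    ∃ f, IsPartialCrown E e t f := by
  induction t using Finset.strongInduction with
  | H t ih =>
    rcases t.eq_empty_or_nonempty with rfl | ht
    · exact ⟨fun _ => ∅, by simp, by simp, by simp, by simp⟩
    · obtain ⟨v, hvt, hv⟩ := hdeg t subset_rfl ht
      have hsub := erase_subset v t
      obtain ⟨f, hf⟩ := ih _ (erase_ssubset hvt) (hsub.trans hte) fun s hs => hdeg s (hs.trans hsub)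
      obtain ⟨g, hg, hvg, hge, hgf⟩ := hf.exists_disjoint_edge h he (hsub.trans hte) (hte hvt)
        (notMem_erase v t) (by rwa [card_erase_of_mem hvt])
      exact ⟨_, hf.update hg hvg hge hgf⟩

lemma IsLinear.exists_low_degree (h : IsLinear r E) (hc : ¬ HasCrown r E) (he : e ∈ E) :
    ∃ s ⊆ e, s.Nonempty ∧ ∀ v ∈ s, degree E v ≤ (s.card - 1) * (r - 1) + 1 := by
  by_contra! hdeg
  obtain ⟨f, hf⟩ := h.exists_isPartialCrown he subset_rfl hdeg
  exact hc (hf.hasCrown h he)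

lemma degree_pos_of_mem (he : e ∈ E) {v : V} (hv : v ∈ e) : 0 < degree E v :=
  card_pos.2 ⟨e, mem_filter.2 ⟨he, hv⟩⟩

lemma card_div_le_sum_inv_degree (he : e ∈ E) {s : Finset V} (hs : s ⊆ e) {d : ℕ}
    (hd : ∀ v ∈ s, degree E v ≤ d) : (s.card : ℝ) / d ≤ ∑ v ∈ e, (1 : ℝ) / degree E v :=
  calc
    (s.card : ℝ) / d = ∑ _v ∈ s, (1 : ℝ) / d := by simp [div_eq_mul_inv]
    _ ≤ ∑ v ∈ s, (1 : ℝ) / degree E v := sum_le_sum fun v hv =>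
      one_div_le_one_div_of_le (mod_cast degree_pos_of_mem he (hs hv)) (mod_cast hd v hv)
    _ ≤ ∑ v ∈ e, (1 : ℝ) / degree E v :=
      sum_le_sum_of_subset_of_nonneg hs fun _ _ _ => by positivity

lemma mul_card_le_of_le_sum_inv_degree {S : Finset V} (hS : ∀ e ∈ E, e ⊆ S) {c : ℝ}
    (hc : ∀ e ∈ E, c ≤ ∑ v ∈ e, (1 : ℝ) / degree E v) : c * E.card ≤ S.card :=
  calc
    c * E.card = ∑ _e ∈ E, c := by simp [mul_comm]
    _ ≤ ∑ e ∈ E, ∑ v ∈ e, (1 : ℝ) / degree E v := sum_le_sum hc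
    _ = ∑ v ∈ S, ∑ e ∈ E with v ∈ e, (1 : ℝ) / degree E v :=
      sum_comm' fun _ _ => by simp only [mem_filter]; grind
    _ = ∑ v ∈ S, (degree E v : ℝ) / degree E v := by simp [degree, div_eq_mul_inv]
    _ ≤ ∑ v ∈ S, 1 := sum_le_sum fun v _ => div_self_le_one _
    _ = S.card := by simp

lemma card_filter_not_disjoint_le (E : Finset (Finset V)) (e : Finset V) :
    (E.filter fun g => ¬ Disjoint g e).card ≤ ∑ v ∈ e, degree E v := by
  refine (card_le_card fun g hg => ?_).trans card_biUnion_le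
  obtain ⟨hgE, hge⟩ := mem_filter.1 hg
  obtain ⟨v, hvg, hve⟩ := not_disjoint_iff.1 hge
  exact mem_biUnion.2 ⟨v, hve, mem_filter.2 ⟨hgE, hvg⟩⟩

/-- Equality holds at `r = 3`, `s = 2`, and the inequality fails at `r = s = 3`. -/
lemma div_le_div_of_card_le {r s : ℕ} (hr : 3 ≤ r) (hs : 1 ≤ s) (hsr : s ≤ r)
    (hor : s < r ∨ 4 ≤ r) :
    ((r : ℝ) - 1) / (r * (r - 2)) ≤ s / ((s - 1) * (r - 1) + 1 : ℕ) := by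
  obtain ⟨i, rfl⟩ := Nat.exists_eq_add_of_le' hs
  obtain ⟨k, rfl⟩ := Nat.exists_eq_add_of_le' hr
  have hik : i ≤ k * (k + 3) + 1 := by
    obtain h | h : i ≤ k + 1 ∨ 1 ≤ k := by omega
    all_goals nlinarith
  have hikR : (i : ℝ) ≤ k * (k + 3) + 1 := mod_cast hik
  rw [div_le_div_iff₀ (by push_cast; ring_nf; positivity) (by positivity)]
  rw [show k + 3 - 1 = k + 2 by omega, Nat.add_sub_cancel]
  push_cast
  nlinarith

end PartialCrown

section TripleSystem

variable {V : Type*} [DecidableEq V] {E : Finset (Finset V)} {e g : Finset V}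
  {a b c x y s t w s' t' u v p q u' v' p' q' : V}

lemma ne_of_card_triple (h : ({x, y, s} : Finset V).card = 3) : x ≠ y ∧ x ≠ s ∧ y ≠ s := by
  have hxy : ({x, y} : Finset V).card ≤ 2 := card_le_two
  have hxs : ({x, s} : Finset V).card ≤ 2 := card_le_two
  refine ⟨?_, ?_, ?_⟩ <;> rintro rfl <;> grind

/-- `{s, t}` is an edge of the link of the vertex `x` of `e` and avoids `e`. -/
def Link (E : Finset (Finset V)) (e : Finset V) (x s t : V) : Prop :=
  {x, s, t} ∈ E ∧ s ∉ e ∧ t ∉ e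

namespace Link

lemma symm (h : Link E e x s t) : Link E e x t s :=
  ⟨pair_comm s t ▸ h.1, h.2.2, h.2.1⟩

lemma ne (h : Link E e x s t) (hE : IsLinear 3 E) : x ≠ s ∧ x ≠ t ∧ s ≠ t :=
  ne_of_card_triple (hE.1 _ h.1)

lemma ne_edge (h : Link E e x s t) : {x, s, t} ≠ e := fun he => h.2.1 (he ▸ by simp)

lemma unique (h : Link E e x s t) (h' : Link E e x s t') (hE : IsLinear 3 E) : t = t' := by
  have heq := hE.eq_of_mem_s17 (x := x) (y := s) h.1 h'.1 (h.ne hE).1 (by simp) (by simp) (by simp)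
    (by simp)
  have ht : t ∈ ({x, s, t'} : Finset V) := heq ▸ by simp
  grind [h.ne hE]

lemma eq_of_link (h : Link E e x s t) (h' : Link E e y s t) (hE : IsLinear 3 E) : x = y := by
  have heq := hE.eq_of_mem_s17 (x := s) (y := t) h.1 h'.1 (h.ne hE).2.2 (by simp) (by simp) (by simp)
    (by simp)
  have hx : x ∈ ({y, s, t} : Finset V) := heq ▸ by simp
  grind [h.ne hE]

lemma notMem_of_mem (h : Link E e x s t) (hE : IsLinear 3 E) (hx : x ∈ e) (hg : g ∈ E)
    (hge : Disjoint g e) (hs : s ∈ g) : t ∉ g := fun ht =>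
  disjoint_left.1 hge
    (hE.eq_of_mem_s17 h.1 hg (h.ne hE).2.2 (by simp) (by simp) hs ht ▸ by simp : x ∈ g) hx

end Link

namespace IsLinear

lemma exists_link_avoiding (h : IsLinear 3 E) (he : e ∈ E) (hx : x ∈ e) {X : Finset V}
    (hXe : Disjoint X e) (hX : X.card + 1 < degree E x) :
    ∃ s t, Link E e x s t ∧ s ∉ X ∧ t ∉ X := by
  obtain ⟨g, hg, hxg, hge, hgX⟩ :=
    h.exists_edge_disjoint e (fun hxX => disjoint_left.1 hXe hxX hx) hX
  obtain ⟨s, t, -, hgx⟩ := card_eq_two.1 (by rw [card_erase_of_mem hxg, h.1 g hg])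
  obtain rfl : g = {x, s, t} := by rw [← insert_erase hxg, hgx]
  obtain ⟨hxs, hxt, -⟩ := ne_of_card_triple (h.1 _ hg)
  refine ⟨s, t, ⟨hg, fun hs => hge ?_, fun ht => hge ?_⟩, ?_, ?_⟩
  · exact h.eq_of_mem_s17 hg he hxs hxg (by simp) hx hs
  · exact h.eq_of_mem_s17 hg he hxt hxg (by simp) hx ht
  · exact disjoint_left.1 hgX (by simp)
  · exact disjoint_left.1 hgX (by simp)

lemma hasCrown_three (h : IsLinear 3 E) (he : e ∈ E) {f₁ f₂ f₃ : Finset V}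
    (hf₁ : f₁ ∈ E ∧ f₁ ≠ e ∧ ∃ v ∈ e, v ∈ f₁) (hf₂ : f₂ ∈ E ∧ f₂ ≠ e ∧ ∃ v ∈ e, v ∈ f₂)
    (hf₃ : f₃ ∈ E ∧ f₃ ≠ e ∧ ∃ v ∈ e, v ∈ f₃) (h₁₂ : Disjoint f₁ f₂) (h₁₃ : Disjoint f₁ f₃)
    (h₂₃ : Disjoint f₂ f₃) : HasCrown 3 E := by
  refine h.hasCrown he (f := ![f₁, f₂, f₃]) ?_ ?_ ?_ ?_ <;>
    simp only [Pairwise, Fin.forall_fin_succ]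
  · simp [hf₁.1, hf₂.1, hf₃.1]
  · simp [hf₁.2.1, hf₂.2.1, hf₃.2.1]
  · simp [Function.onFun, h₁₂, h₁₃, h₂₃, h₁₂.symm, h₁₃.symm, h₂₃.symm]
  · simp [hf₁.2.2, hf₂.2.2, hf₃.2.2]

/-- Otherwise `g`, `{y, t, w}` and `{x, s', t'}` form a crown with base `{x, s, t}`. -/
lemma mem_or_mem_of_link (hE : IsLinear 3 E) (hc : ¬ HasCrown 3 E) (hx : x ∈ e) (hy : y ∈ e)
    (hxy : x ≠ y) (hg : g ∈ E) (hge : Disjoint g e) (hst : Link E e x s t) (htw : Link E e y t w)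
    (hst' : Link E e x s' t') (hd : [s, t, w, s', t'].Nodup) (hs : s ∈ g) (hw : w ∉ g) :
    s' ∈ g ∨ t' ∈ g := by
  by_contra! hg'
  have ht := hst.notMem_of_mem hE hx hg hge hs
  have hxg := disjoint_right.1 hge hx
  have hyg := disjoint_right.1 hge hy
  obtain ⟨hstE, hse, hte⟩ := hst
  obtain ⟨htwE, -, hwe⟩ := htw
  obtain ⟨hst'E, hs'e, ht'e⟩ := hst'
  simp only [List.nodup_cons, List.mem_cons, List.not_mem_nil, List.nodup_nil] at hd
  refine hc (hE.hasCrown_three hstE ⟨hg, ?_, s, by simp, hs⟩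
    ⟨htwE, ?_, t, by simp, by simp⟩ ⟨hst'E, ?_, x, by simp, by simp⟩ ?_ ?_ ?_)
  · exact (ne_of_mem_of_not_mem' (a := x) (by simp) hxg).symm
  · exact (ne_of_mem_of_not_mem' (a := x) (by simp) (by grind)).symm
  · exact (ne_of_mem_of_not_mem' (a := s) (by simp) (by grind)).symm
  all_goals rw [disjoint_left]; grind

end IsLinear

/-- An edge `e = {a, b, c}` of a crown-free linear `3`-uniform hypergraph whose vertices have
degrees at least `4`, `5`, `5`, as happens when the inverse degrees sum to less than `2/3`. -/
structure IsHeavy_s17 (E : Finset (Finset V)) (e : Finset V) (a b c : V) : Prop where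
  isLinear : IsLinear 3 E
  not_hasCrown : ¬ HasCrown 3 E
  mem : e ∈ E
  eq : e = {a, b, c}
  four_le_degree_a : 4 ≤ degree E a
  five_le_degree_b : 5 ≤ degree E b
  five_le_degree_c : 5 ≤ degree E c

/-- A `4`-cycle `u p v q` alternating between the links of `b` and of `c`, with the diagonal `uv`
in the link of `a`. -/
structure IsBlock (E : Finset (Finset V)) (e : Finset V) (a b c u p v q : V) : Prop where
  diag : Link E e a u v
  link_b_u : Link E e b u p
  link_b_v : Link E e b v q
  link_c_u : Link E e c u q
  link_c_v : Link E e c v p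

namespace IsHeavy_s17

lemma swap (h : IsHeavy_s17 E e a b c) : IsHeavy_s17 E e a c b :=
  ⟨h.isLinear, h.not_hasCrown, h.mem, h.eq.trans (by rw [pair_comm]), h.four_le_degree_a,
    h.five_le_degree_c, h.five_le_degree_b⟩

lemma mem_edge (h : IsHeavy_s17 E e a b c) : a ∈ e ∧ b ∈ e ∧ c ∈ e := by
  simp [h.eq]

lemma ne (h : IsHeavy_s17 E e a b c) : a ≠ b ∧ a ≠ c ∧ b ≠ c :=
  ne_of_card_triple (h.eq ▸ h.isLinear.1 e h.mem)

lemma not_nodup (h : IsHeavy_s17 E e a b c) (ha : Link E e a u v) (hb : Link E e b s t)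
    (hc : Link E e c s' t') : ¬ [u, v, s, t, s', t'].Nodup := by
  intro hd
  obtain ⟨hae, hbe, hce⟩ := h.mem_edge
  have hne := h.ne
  refine h.not_hasCrown (h.isLinear.hasCrown_three h.mem
    ⟨ha.1, ha.ne_edge, a, hae, by simp⟩ ⟨hb.1, hb.ne_edge, b, hbe, by simp⟩
    ⟨hc.1, hc.ne_edge, c, hce, by simp⟩ ?_ ?_ ?_)
  all_goals
    simp only [List.nodup_cons, List.mem_cons, List.not_mem_nil, List.nodup_nil] at hd
    obtain ⟨-, hu, hv⟩ := ha
    obtain ⟨-, hs, ht⟩ := hb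
    obtain ⟨-, hs', ht'⟩ := hc
    simp only [disjoint_insert_left, disjoint_singleton_left, mem_insert, mem_singleton]
    grind

lemma exists_link_of_mem (h : IsHeavy_s17 E e a b c) (ha : Link E e a u v) (hb : Link E e b s t)
    (hd : [u, v, s, t].Nodup) (hx : x ∈ ({u, v, s, t} : Finset V)) : ∃ w, Link E e c x w := by
  have hX : (({u, v, s, t} : Finset V).erase x).card + 1 < degree E c := by
    have := card_le_four (a := u) (b := v) (c := s) (d := t)
    have := h.five_le_degree_c
    rw [card_erase_of_mem hx]
    omega
  have hXe : Disjoint (({u, v, s, t} : Finset V).erase x) e :=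
    disjoint_of_subset_left (erase_subset _ _) (by simp [ha.2, hb.2])
  obtain ⟨s', t', hc, hs', ht'⟩ := h.isLinear.exists_link_avoiding h.mem h.mem_edge.2.2 hXe hX
  by_cases hs'x : s' = x
  · exact ⟨t', hs'x ▸ hc⟩
  by_cases ht'x : t' = x
  · exact ⟨s', ht'x ▸ hc.symm⟩
  refine (h.not_nodup ha hb hc ?_).elim
  have := (hc.ne h.isLinear).2.2
  simp only [List.nodup_cons, List.mem_cons, List.not_mem_nil, List.nodup_nil, mem_erase,
    mem_insert, mem_singleton] at *
  grind

lemma exists_link_of_link_a (h : IsHeavy_s17 E e a b c) (ha : Link E e a u v) :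
    ∃ w, Link E e c u w := by
  obtain ⟨s, t, hb, hs, ht⟩ := h.isLinear.exists_link_avoiding (X := {u, v}) h.mem h.mem_edge.2.1
    (by simp [ha.2]) (by have := h.five_le_degree_b; grind [card_le_two])
  refine h.exists_link_of_mem ha hb ?_ (by simp)
  simpa using by grind [ha.ne h.isLinear, hb.ne h.isLinear]

lemma exists_link_of_link_b (h : IsHeavy_s17 E e a b c) (hb : Link E e b s t) :
    ∃ w, Link E e c s w := by
  obtain ⟨u, v, ha, hu, hv⟩ := h.isLinear.exists_link_avoiding (X := {s, t}) h.mem h.mem_edge.1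
    (by simp [hb.2]) (by have := h.four_le_degree_a; grind [card_le_two])
  refine h.exists_link_of_mem ha hb ?_ (by simp)
  simpa using by grind [ha.ne h.isLinear, hb.ne h.isLinear]

lemma link_of_link_a_of_link_b (h : IsHeavy_s17 E e a b c) (ha : Link E e a u v) (hb : Link E e b u p) :
    Link E e c v p := by
  obtain ⟨w, hc⟩ := h.exists_link_of_link_b hb.symm
  by_cases hwv : w = v
  · exact hwv ▸ hc.symm
  obtain ⟨s, t, hst, hs, ht⟩ := h.isLinear.exists_link_avoiding (X := {u, v, w}) h.mem
    h.mem_edge.2.1 (by simp [ha.2, hc.2]) (by have := h.five_le_degree_b; grind [card_le_three])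
  refine (h.not_nodup ha hst hc ?_).elim
  have hwu : w ≠ u := by
    rintro rfl
    exact h.ne.2.2 (hb.symm.eq_of_link hc h.isLinear)
  have hpv : p ≠ v := by
    rintro rfl
    exact h.ne.1 (ha.eq_of_link hb h.isLinear)
  have hsp : s ≠ p := by
    rintro rfl
    grind [hst.unique hb.symm h.isLinear]
  have htp : t ≠ p := by
    rintro rfl
    grind [hst.symm.unique hb.symm h.isLinear]
  simp only [List.nodup_cons, List.mem_cons, List.not_mem_nil, List.nodup_nil]
  grind [ha.ne h.isLinear, hb.ne h.isLinear, hc.ne h.isLinear, hst.ne h.isLinear]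

lemma exists_isBlock (h : IsHeavy_s17 E e a b c) (ha : Link E e a u v) :
    ∃ p q, IsBlock E e a b c u p v q := by
  obtain ⟨p, hp⟩ := h.swap.exists_link_of_link_a ha
  obtain ⟨q, hq⟩ := h.swap.exists_link_of_link_a ha.symm
  exact ⟨p, q, ha, hp, hq, h.link_of_link_a_of_link_b ha.symm hq, h.link_of_link_a_of_link_b ha hp⟩

end IsHeavy_s17

namespace IsBlock

lemma rotate (hB : IsBlock E e a b c u p v q) : IsBlock E e a b c v q u p :=
  ⟨hB.diag.symm, hB.link_b_v, hB.link_b_u, hB.link_c_v, hB.link_c_u⟩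

lemma swap (hB : IsBlock E e a b c u p v q) : IsBlock E e a c b u q v p :=
  ⟨hB.diag, hB.link_c_u, hB.link_c_v, hB.link_b_u, hB.link_b_v⟩

lemma nodup (hB : IsBlock E e a b c u p v q) (hE : IsLinear 3 E) : [u, p, v, q].Nodup := by
  have hpq : p ≠ q := by
    rintro rfl
    exact (hB.diag.ne hE).2.2 (hB.link_b_u.symm.unique hB.link_b_v.symm hE)
  simp only [List.nodup_cons, List.mem_cons, List.not_mem_nil, List.nodup_nil]
  grind [hB.diag.ne hE, hB.link_b_u.ne hE, hB.link_b_v.ne hE, hB.link_c_u.ne hE, hB.link_c_v.ne hE]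

lemma mem_of_link (hB : IsBlock E e a b c u p v q) (hE : IsLinear 3 E) (hb : Link E e b s t)
    (hs : s ∈ [u, p, v, q]) : t ∈ [u, p, v, q] := by
  simp only [List.mem_cons, List.not_mem_nil, or_false] at hs ⊢
  rcases hs with rfl | rfl | rfl | rfl
  · exact .inr (.inl (hb.unique hB.link_b_u hE))
  · exact .inl (hb.unique hB.link_b_u.symm hE)
  · exact .inr (.inr (.inr (hb.unique hB.link_b_v hE)))
  · exact .inr (.inr (.inl (hb.unique hB.link_b_v.symm hE)))

end IsBlock

namespace IsHeavy_s17

lemma exists_disjoint_isBlock (h : IsHeavy_s17 E e a b c) (hB : IsBlock E e a b c u p v q) :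
    ∃ u' p' v' q', IsBlock E e a b c u' p' v' q' ∧ [u, p, v, q, u', p', v', q'].Nodup := by
  have hE := h.isLinear
  obtain ⟨u', v', ha, hu', hv'⟩ := hE.exists_link_avoiding (X := {u, p}) h.mem h.mem_edge.1
    (by simp [hB.link_b_u.2]) (by have := h.four_le_degree_a; grind [card_le_two])
  obtain ⟨p', q', hB'⟩ := h.exists_isBlock ha
  have notMem_block : ∀ {s t}, Link E e a s t → s ∉ ({u, p} : Finset V) →
      t ∉ ({u, p} : Finset V) → s ∉ [u, p, v, q] := by
    intro s t hst hs ht hmem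
    obtain rfl | rfl : s = v ∨ s = q := by grind
    · grind [hst.unique hB.diag.symm hE]
    · have hvt := h.link_of_link_a_of_link_b hst hB.link_b_v.symm
      grind [hvt.symm.unique hB.link_c_v hE]
  have hu := notMem_block ha hu' hv'
  have hv := notMem_block ha.symm hv' hu'
  have hp : p' ∉ [u, p, v, q] := fun hp => hu (hB.mem_of_link hE hB'.link_b_u.symm hp)
  have hq : q' ∉ [u, p, v, q] := fun hq => hv (hB.mem_of_link hE hB'.link_b_v.symm hq)
  refine ⟨u', p', v', q', hB', ?_⟩
  have hnd := hB.nodup hE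
  have hnd' := hB'.nodup hE
  simp only [List.nodup_cons, List.mem_cons, List.not_mem_nil, List.nodup_nil] at *
  grind

section Blocks

variable (h : IsHeavy_s17 E e a b c) (hB : IsBlock E e a b c u p v q)
  (hB' : IsBlock E e a b c u' p' v' q') (hd : [u, p, v, q, u', p', v', q'].Nodup) (hg : g ∈ E)
  (hge : Disjoint g e)

include h hB hB' hd hg hge

lemma diag_notMem : u ∉ g := by
  intro hu
  obtain ⟨hae, hbe, hce⟩ := h.mem_edge
  have hE := h.isLinear
  have hc := h.not_hasCrown
  simp only [List.nodup_cons, List.mem_cons, List.not_mem_nil, List.nodup_nil] at hd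
  have hv := hB.diag.notMem_of_mem hE hae hg hge hu
  have hq := hB.link_c_u.notMem_of_mem hE hce hg hge hu
  have hu'p' : u' ∈ g ∨ p' ∈ g := hE.mem_or_mem_of_link hc hbe hce h.ne.2.2 hg hge hB.link_b_u
    hB.link_c_v.symm hB'.link_b_u (by simpa using by grind) hu hv
  have hv'q' : v' ∈ g ∨ q' ∈ g := hE.mem_or_mem_of_link hc hbe hce h.ne.2.2 hg hge hB.link_b_u
    hB.link_c_v.symm hB'.link_b_v (by simpa using by grind) hu hv
  have hu'v' : u' ∈ g ∨ v' ∈ g := hE.mem_or_mem_of_link hc hae hbe h.ne.1 hg hge hB.diag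
    hB.link_b_v hB'.diag (by simpa using by grind) hu hq
  have := hB'.diag.notMem_of_mem hE hae hg hge
  have := hB'.link_c_u.notMem_of_mem hE hce hg hge
  have := hB'.link_c_v.notMem_of_mem hE hce hg hge
  tauto

lemma offDiag_mem_of_offDiag_mem (hp : p ∈ g) : p' ∈ g ∧ q' ∈ g := by
  obtain ⟨hae, hbe, -⟩ := h.mem_edge
  have hE := h.isLinear
  have hc := h.not_hasCrown
  simp only [List.nodup_cons, List.mem_cons, List.not_mem_nil, List.nodup_nil] at hd
  have hv : v ∉ g := h.diag_notMem hB.rotate hB' (by simpa using by grind) hg hge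
  have hu' : u' ∉ g := h.diag_notMem hB' hB (by simpa using by grind) hg hge
  have hv' : v' ∉ g := h.diag_notMem hB'.rotate hB (by simpa using by grind) hg hge
  exact ⟨(hE.mem_or_mem_of_link hc hbe hae h.ne.1.symm hg hge hB.link_b_u.symm hB.diag hB'.link_b_u
      (by simpa using by grind) hp hv).resolve_left hu',
    (hE.mem_or_mem_of_link hc hbe hae h.ne.1.symm hg hge hB.link_b_u.symm hB.diag hB'.link_b_v
      (by simpa using by grind) hp hv).resolve_left hv'⟩

lemma offDiag_notMem : p ∉ g := by
  intro hp
  obtain ⟨hp', hq'⟩ := h.offDiag_mem_of_offDiag_mem hB hB' hd hg hge hp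
  obtain ⟨-, hq⟩ := h.offDiag_mem_of_offDiag_mem hB' hB
    (List.nodup_append_comm (l₁ := [u, p, v, q]).1 hd) hg hge hp'
  simp only [List.nodup_cons, List.mem_cons, List.not_mem_nil, List.nodup_nil] at hd
  have hsub : ({p, q, p', q'} : Finset V) ⊆ g := by grind
  have hcard : ({p, q, p', q'} : Finset V).card = 4 := by grind [card_eq_succ]
  have := card_le_card hsub
  rw [h.isLinear.1 g hg] at this
  omega

lemma disjoint_block : Disjoint g {u, p, v, q} := by
  have hd' : [v, q, u, p, u', p', v', q'].Nodup := by
    simp only [List.nodup_cons, List.mem_cons, List.not_mem_nil, List.nodup_nil] at hd ⊢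
    grind
  simp only [disjoint_insert_right, disjoint_singleton_right]
  exact ⟨h.diag_notMem hB hB' hd hg hge, h.offDiag_notMem hB hB' hd hg hge,
    h.diag_notMem hB.rotate hB' hd' hg hge, h.offDiag_notMem hB.rotate hB' hd' hg hge⟩

end Blocks

lemma exists_closed (h : IsHeavy_s17 E e a b c) :
    ∃ T ⊆ E.biUnion id, T.card = 11 ∧ ∀ g ∈ E, Disjoint g e → Disjoint g T := by
  have hE := h.isLinear
  obtain ⟨u, v, ha, -⟩ := hE.exists_link_avoiding (X := ∅) h.mem h.mem_edge.1 (by simp)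
    (by have := h.four_le_degree_a; rw [card_empty]; omega)
  obtain ⟨p, q, hB⟩ := h.exists_isBlock ha
  obtain ⟨u', p', v', q', hB', hd⟩ := h.exists_disjoint_isBlock hB
  have hmem : ∀ {x s t}, Link E e x s t → s ∈ E.biUnion id ∧ t ∈ E.biUnion id := fun hl =>
    ⟨mem_biUnion.2 ⟨_, hl.1, by simp⟩, mem_biUnion.2 ⟨_, hl.1, by simp⟩⟩
  have hCe : Disjoint e [u, p, v, q, u', p', v', q'].toFinset := by
    simp [hB.link_b_u.2, hB.link_b_v.2, hB'.link_b_u.2, hB'.link_b_v.2]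
  refine ⟨e ∪ [u, p, v, q, u', p', v', q'].toFinset, ?_, ?_, fun g hg hge => ?_⟩
  · refine union_subset (subset_biUnion_of_mem id h.mem) ?_
    simp only [List.toFinset_cons, List.toFinset_nil, insert_subset_iff, empty_subset, and_true]
    exact ⟨(hmem hB.link_b_u).1, (hmem hB.link_b_u).2, (hmem hB.link_b_v).1, (hmem hB.link_b_v).2,
      (hmem hB'.link_b_u).1, (hmem hB'.link_b_u).2, (hmem hB'.link_b_v).1, (hmem hB'.link_b_v).2⟩
  · rw [card_union_of_disjoint hCe, hE.1 e h.mem, List.toFinset_card_of_nodup hd]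
    rfl
  · have hC := h.disjoint_block hB hB' hd hg hge
    have hC' := h.disjoint_block hB' hB (List.nodup_append_comm (l₁ := [u, p, v, q]).1 hd) hg hge
    simp only [disjoint_union_right, List.toFinset_cons, List.toFinset_nil, disjoint_insert_right,
      disjoint_singleton_right] at hC hC' ⊢
    tauto

end IsHeavy_s17

lemma four_le_and_five_le_of_sum_inv_lt {x y z : ℕ} (hx : 0 < x) (hxy : x ≤ y) (hxz : x ≤ z)
    (hy : y ≤ 5) (hz : z ≤ 5) (h : (1 : ℝ) / x + 1 / y + 1 / z < 2 / 3) :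
    4 ≤ x ∧ 5 ≤ y ∧ 5 ≤ z := by
  have inv_le {m n : ℕ} (hm : 0 < m) (hmn : m ≤ n) : (1 : ℝ) / n ≤ 1 / m :=
    one_div_le_one_div_of_le (mod_cast hm) (mod_cast hmn)
  have hy5 := inv_le (hx.trans_le hxy) hy
  have hz5 := inv_le (hx.trans_le hxz) hz
  -- `1/3 + 1/5 + 1/5` and `1/4 + 1/4 + 1/5` both exceed `2/3`.
  have hx4 : 4 ≤ x := by
    by_contra! hx4
    have := inv_le hx (Nat.le_of_lt_succ hx4)
    norm_num at *
    linarith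
  refine ⟨hx4, ?_, ?_⟩ <;> by_contra! hlt
  · have := inv_le hx (hxy.trans (Nat.le_of_lt_succ hlt))
    have := inv_le (hx.trans_le hxy) (Nat.le_of_lt_succ hlt)
    norm_num at *
    linarith
  · have := inv_le hx (hxz.trans (Nat.le_of_lt_succ hlt))
    have := inv_le (hx.trans_le hxz) (Nat.le_of_lt_succ hlt)
    norm_num at *
    linarith

lemma IsLinear.exists_isHeavy_of_sum_inv_lt (hE : IsLinear 3 E) (hc : ¬ HasCrown 3 E) (he : e ∈ E)
    (hsum : ∑ v ∈ e, (1 : ℝ) / degree E v < 2 / 3) :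
    (∃ a b c, IsHeavy_s17 E e a b c) ∧ ∀ v ∈ e, degree E v ≤ 5 := by
  have hcard := hE.1 e he
  obtain ⟨s, hse, hs, hdeg⟩ := hE.exists_low_degree hc he
  obtain rfl : s = e := by
    refine eq_of_subset_of_card_le hse (not_lt.1 fun hlt => hsum.not_ge ?_)
    have := div_le_div_of_card_le (r := 3) le_rfl (card_pos.2 hs) (by omega) (.inl (by omega))
    exact le_trans (by norm_num at this ⊢; exact this) (card_div_le_sum_inv_degree he hse hdeg)
  have hdeg5 : ∀ v ∈ s, degree E v ≤ 5 := by simpa [hcard] using hdeg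
  obtain ⟨a, ha, hmin⟩ := exists_min_image s (degree E) hs
  obtain ⟨b, c, hbc, hsa⟩ := card_eq_two.1 (by rw [card_erase_of_mem ha, hcard])
  obtain rfl : s = {a, b, c} := by rw [← insert_erase ha, hsa]
  obtain ⟨hab, hac, -⟩ := ne_of_card_triple hcard
  rw [sum_insert (by simp [hab, hac]), sum_pair hbc, ← add_assoc] at hsum
  obtain ⟨h4, h5, h5'⟩ := four_le_and_five_le_of_sum_inv_lt (degree_pos_of_mem he ha)
    (hmin b (by simp)) (hmin c (by simp)) (hdeg5 b (by simp)) (hdeg5 c (by simp)) hsum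
  exact ⟨⟨a, b, c, hE, hc, he, rfl, h4, h5, h5'⟩, hdeg5⟩

lemma IsLinear.two_mul_card_le (hE : IsLinear 3 E) (hc : ¬ HasCrown 3 E) {S : Finset V}
    (hS : ∀ e ∈ E, e ⊆ S) : 2 * E.card ≤ 3 * S.card := by
  induction S using Finset.strongInduction generalizing E with
  | H S ih =>
    by_cases hsum : ∀ e ∈ E, (2 / 3 : ℝ) ≤ ∑ v ∈ e, (1 : ℝ) / degree E v
    · have := mul_card_le_of_le_sum_inv_degree hS hsum
      have : (2 * E.card : ℝ) ≤ 3 * S.card := by linarith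
      exact_mod_cast this
    push Not at hsum
    obtain ⟨e, he, hsum⟩ := hsum
    obtain ⟨⟨a, b, c, h⟩, hdeg⟩ := hE.exists_isHeavy_of_sum_inv_lt hc he hsum
    obtain ⟨T, hTE, hT, hclosed⟩ := h.exists_closed
    have hTS : T ⊆ S := hTE.trans (biUnion_subset.2 hS)
    have hsub : E.filter (Disjoint · e) ⊆ E := filter_subset _ _
    have hrec : 2 * (E.filter (Disjoint · e)).card ≤ 3 * (S \ T).card := by
      refine ih _ (sdiff_ssubset hTS (card_pos.1 (by omega))) (hE.mono hsub)
        (fun hcrown => hc (hcrown.mono hsub)) fun g hg => ?_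
      obtain ⟨hgE, hge⟩ := mem_filter.1 hg
      exact subset_sdiff.2 ⟨hS g hgE, hclosed g hgE hge⟩
    have hmeet : (E.filter fun g => ¬ Disjoint g e).card ≤ 15 :=
      calc
        _ ≤ ∑ v ∈ e, degree E v := card_filter_not_disjoint_le E e
        _ ≤ e.card * 5 := sum_le_card_nsmul e _ 5 hdeg
        _ = 15 := by rw [hE.1 e he]
    have := card_filter_add_card_filter_not (s := E) (Disjoint · e)
    have := card_sdiff_add_card_eq_card hTS
    omega

end TripleSystem

theorem IsLinear.card_le_of_not_hasCrown {V : Type*} [DecidableEq V] {r : ℕ} {E : Finset (Finset V)}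
    (hr : 3 ≤ r) (hE : IsLinear r E) (hc : ¬ HasCrown r E) {S : Finset V} (hS : ∀ e ∈ E, e ⊆ S) :
    (E.card : ℝ) ≤ r * (r - 2) * S.card / (r - 1) := by
  rcases hr.eq_or_lt with rfl | hr4
  · have := hE.two_mul_card_le hc hS
    have : (2 * E.card : ℝ) ≤ 3 * S.card := mod_cast this
    norm_num
    linarith
  have hrR : (4 : ℝ) ≤ r := mod_cast hr4
  have hsum : ∀ e ∈ E, ((r : ℝ) - 1) / (r * (r - 2)) ≤ ∑ v ∈ e, (1 : ℝ) / degree E v := by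
    intro e he
    obtain ⟨s, hse, hs, hdeg⟩ := hE.exists_low_degree hc he
    exact (div_le_div_of_card_le hr (card_pos.2 hs) (hE.1 e he ▸ card_le_card hse)
      (.inr hr4)).trans (card_div_le_sum_inv_degree he hse hdeg)
  have := mul_card_le_of_le_sum_inv_degree hS hsum
  rw [div_mul_eq_mul_div, div_le_iff₀ (by nlinarith)] at this
  rw [le_div_iff₀ (by linarith)]
  linarith

section Gluing

open Configuration ProjectivePlane

/-- Copies `σ i` of the point set `P` in `V` which share the points of the line `ℓ` and are
otherwise disjoint. -/
def IsGluing {ι P L V : Type*} [Membership P L] (ℓ : L) (σ : ι → P → V) : Prop :=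
  ∀ i j p q, σ i p = σ j q ↔ p = q ∧ (p ∈ ℓ ∨ i = j)

open Classical in
/-- The copy of the line `l` under the map `σ` of points to vertices. -/
noncomputable def lineCopy {P L V : Type*} [Membership P L] [Fintype P] (σ : P → V) (l : L) :
    Finset V :=
  (univ.filter (· ∈ l)).image σ

open Classical in
/-- The hypergraph of the copies of all lines except `ℓ`. -/
noncomputable def gluedLines {ι P L V : Type*} [Membership P L] [Fintype ι] [Fintype P]
    [Fintype L] (ℓ : L) (σ : ι → P → V) : Finset (Finset V) :=
  univ.image fun x : ι × {l : L // l ≠ ℓ} => lineCopy (σ x.1) x.2.1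

variable {ι P L V : Type*} [Membership P L] {ℓ l m : L} {σ : ι → P → V} {i j : ι}
  {x y : V}

lemma exists_isGluing [Finite P] [Fintype ι] [Finite L] [ProjectivePlane P L] [Fintype V] (ℓ : L)
    (hV : order P L + 1 + Fintype.card ι * order P L ^ 2 ≤ Fintype.card V) :
    ∃ σ : ι → P → V, IsGluing ℓ σ := by
  classical
  have := Fintype.ofFinite P
  have hℓ : Fintype.card {p : P // p ∈ ℓ} = order P L + 1 := by
    rw [← pointCount_eq P ℓ, pointCount, Nat.card_eq_fintype_card]
  have hcompl : Fintype.card {p : P // p ∉ ℓ} = order P L ^ 2 := by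
    rw [Fintype.card_subtype_compl, hℓ, card_points P L]
    omega
  obtain ⟨φ⟩ : Nonempty ({p : P // p ∈ ℓ} ⊕ ι × {p : P // p ∉ ℓ} ↪ V) := by
    apply Function.Embedding.nonempty_of_card_le
    rwa [Fintype.card_sum, Fintype.card_prod, hℓ, hcompl]
  refine ⟨fun i p => if hp : p ∈ ℓ then φ (.inl ⟨p, hp⟩) else φ (.inr (i, ⟨p, hp⟩)),
    fun i j p q => ?_⟩
  dsimp only
  split_ifs with hp hq hq <;>
    simp only [EmbeddingLike.apply_eq_iff_eq, Sum.inl.injEq, Sum.inr.injEq, Prod.mk.injEq,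
      Subtype.mk.injEq] <;>
    grind

variable [Fintype P]

lemma mem_lineCopy {τ : P → V} : x ∈ lineCopy τ l ↔ ∃ p ∈ l, τ p = x := by
  simp [lineCopy]

lemma mem_gluedLines [Fintype ι] [Fintype L] {e : Finset V} :
    e ∈ gluedLines ℓ σ ↔ ∃ i, ∃ l ≠ ℓ, lineCopy (σ i) l = e := by
  simp [gluedLines]

namespace IsGluing

variable (hσ : IsGluing ℓ σ)

include hσ

lemma card_lineCopy [Finite L] [ProjectivePlane P L] (i : ι) (l : L) :
    (lineCopy (σ i) l).card = order P L + 1 := by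
  classical
  rw [lineCopy, card_image_of_injective _ fun p q hpq => ((hσ i i p q).1 hpq).1,
    ← Fintype.card_subtype, ← Nat.card_eq_fintype_card]
  exact pointCount_eq P l

lemma eq_of_mem_lineCopy [Nondegenerate P L] (hl : l ≠ ℓ) (hxy : x ≠ y)
    (hxl : x ∈ lineCopy (σ i) l) (hyl : y ∈ lineCopy (σ i) l) (hxm : x ∈ lineCopy (σ j) m)
    (hym : y ∈ lineCopy (σ j) m) : i = j ∧ l = m := by
  obtain ⟨p, hpl, rfl⟩ := mem_lineCopy.1 hxl
  obtain ⟨q, hql, rfl⟩ := mem_lineCopy.1 hyl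
  obtain ⟨p', hpm, hp⟩ := mem_lineCopy.1 hxm
  obtain ⟨q', hqm, hq⟩ := mem_lineCopy.1 hym
  obtain ⟨rfl, hpℓ⟩ := (hσ _ _ _ _).1 hp
  obtain ⟨rfl, hqℓ⟩ := (hσ _ _ _ _).1 hq
  have hpq : p' ≠ q' := fun h => hxy (h ▸ rfl)
  refine ⟨?_, (Nondegenerate.eq_or_eq hpl hql hpm hqm).resolve_left hpq⟩
  by_contra hij
  exact hl ((Nondegenerate.eq_or_eq hpl hql (hpℓ.resolve_right (Ne.symm hij))
    (hqℓ.resolve_right (Ne.symm hij))).resolve_left hpq)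

lemma exists_mem_of_not_disjoint (hij : i ≠ j)
    (h : ¬ Disjoint (lineCopy (σ i) l) (lineCopy (σ j) m)) : ∃ p ∈ l, p ∈ ℓ ∧ p ∈ m := by
  classical
  obtain ⟨x, hxl, hxm⟩ := not_disjoint_iff.1 h
  obtain ⟨p, hpl, rfl⟩ := mem_lineCopy.1 hxl
  obtain ⟨q, hqm, hpq⟩ := mem_lineCopy.1 hxm
  obtain ⟨rfl, hqℓ⟩ := (hσ _ _ _ _).1 hpq
  exact ⟨q, hpl, hqℓ.resolve_right hij.symm, hqm⟩

lemma eq_or_eq_of_disjoint [Nondegenerate P L] {l₁ l₂ : L} {i₁ i₂ : ι} (hl : l ≠ ℓ)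
    (h₁ : ¬ Disjoint (lineCopy (σ i) l) (lineCopy (σ i₁) l₁))
    (h₂ : ¬ Disjoint (lineCopy (σ i) l) (lineCopy (σ i₂) l₂))
    (h₁₂ : Disjoint (lineCopy (σ i₁) l₁) (lineCopy (σ i₂) l₂)) : i₁ = i ∨ i₂ = i := by
  by_contra! hi
  obtain ⟨p, hpl, hpℓ, hp₁⟩ := hσ.exists_mem_of_not_disjoint hi.1.symm h₁
  obtain ⟨q, hql, hqℓ, hq₂⟩ := hσ.exists_mem_of_not_disjoint hi.2.symm h₂
  obtain rfl := (Nondegenerate.eq_or_eq hpl hql hpℓ hqℓ).resolve_right hl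
  exact disjoint_left.1 h₁₂ (mem_lineCopy.2 ⟨p, hp₁, rfl⟩)
    (mem_lineCopy.2 ⟨p, hq₂, (hσ _ _ _ _).2 ⟨rfl, .inl hpℓ⟩⟩)

lemma isLinear_gluedLines [DecidableEq V] [Fintype ι] [Fintype L] [ProjectivePlane P L] :
    IsLinear (order P L + 1) (gluedLines ℓ σ) := by
  refine ⟨fun e he => ?_, fun e he f hf hef => card_le_one.2 fun x hx y hy => ?_⟩
  · obtain ⟨i, l, -, rfl⟩ := mem_gluedLines.1 he
    exact hσ.card_lineCopy i l
  · obtain ⟨i, l, hl, rfl⟩ := mem_gluedLines.1 he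
    obtain ⟨j, m, -, rfl⟩ := mem_gluedLines.1 hf
    rw [mem_inter] at hx hy
    by_contra hxy
    obtain ⟨rfl, rfl⟩ := hσ.eq_of_mem_lineCopy hl hxy hx.1 hy.1 hx.2 hy.2
    exact hef rfl

lemma card_gluedLines [Fintype ι] [Fintype L] [ProjectivePlane P L] :
    (gluedLines ℓ σ).card = Fintype.card ι * (order P L ^ 2 + order P L) := by
  classical
  have hinj : Function.Injective fun x : ι × {l : L // l ≠ ℓ} => lineCopy (σ x.1) x.2.1 := by
    rintro ⟨i, l, hl⟩ ⟨j, m, hm⟩ heq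
    obtain ⟨x, hx, y, hy, hxy⟩ := one_lt_card.1
      (by rw [hσ.card_lineCopy i l]; linarith [one_lt_order P L])
    dsimp only at heq
    obtain ⟨rfl, rfl⟩ := hσ.eq_of_mem_lineCopy hl hxy hx hy (heq ▸ hx) (heq ▸ hy)
    rfl
  rw [gluedLines, card_image_of_injective _ hinj, card_univ, Fintype.card_prod,
    Fintype.card_subtype_compl, Fintype.card_subtype_eq, card_lines P L, Nat.add_sub_cancel]

end IsGluing

lemma not_disjoint_lineCopy [Finite L] [ProjectivePlane P L] (τ : P → V) (l m : L) :
    ¬ Disjoint (lineCopy τ l) (lineCopy τ m) := by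
  classical
  obtain ⟨p, hpl, hpm⟩ : ∃ p : P, p ∈ l ∧ p ∈ m := by
    by_cases hlm : l = m
    · obtain ⟨⟨p, hp⟩⟩ := (Nat.card_pos_iff.1 (zero_lt_two.trans (two_lt_pointCount P l))).1
      exact ⟨p, hp, hlm ▸ hp⟩
    · exact ⟨_, HasPoints.mkPoint_ax hlm⟩
  exact not_disjoint_iff.2 ⟨τ p, mem_lineCopy.2 ⟨p, hpl, rfl⟩, mem_lineCopy.2 ⟨p, hpm, rfl⟩⟩

/-- Three pairwise disjoint edges that all meet a fourth one, a configuration contained in both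
forbidden hypergraphs. -/
def HasThreeDisjointNeighbors (E : Finset (Finset V)) : Prop :=
  ∃ e ∈ E, ∃ f : Fin 3 → Finset V, (∀ i, f i ∈ E) ∧ (∀ i, ¬ Disjoint e (f i)) ∧
    Pairwise (Function.onFun Disjoint f)

lemma IsGluing.not_hasThreeDisjointNeighbors [Fintype ι] [Fintype L] [ProjectivePlane P L]
    (hσ : IsGluing ℓ σ) : ¬ HasThreeDisjointNeighbors (gluedLines ℓ σ) := by
  rintro ⟨e, he, f, hf, hef, hdisj⟩
  obtain ⟨i, l, hl, rfl⟩ := mem_gluedLines.1 he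
  choose j m _ hfj using fun k => mem_gluedLines.1 (hf k)
  obtain rfl : (fun k => lineCopy (σ (j k)) (m k)) = f := funext hfj
  have hne {k k' : Fin 3} (hk : k ≠ k') : j k ≠ j k' := fun heq =>
    not_disjoint_lineCopy (σ (j k')) (m k) (m k')
      (by simpa only [Function.onFun, heq] using hdisj hk)
  have heq {k k' : Fin 3} (hk : k ≠ k') : j k = i ∨ j k' = i :=
    hσ.eq_or_eq_of_disjoint hl (hef k) (hef k') (hdisj hk)
  have := heq (k := 0) (k' := 1) (by decide)
  have := heq (k := 0) (k' := 2) (by decide)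
  have := heq (k := 1) (k' := 2) (by decide)
  grind

section Forbidden

variable [DecidableEq V] {r : ℕ} {E : Finset (Finset V)}

lemma hasThreeDisjointNeighbors_of_inter {e : Finset V} (he : e ∈ E) {f : Fin r → Finset V}
    (hf : ∀ i, f i ∈ E) (hef : ∀ i, (e ∩ f i).card = 1) (φ : Fin 3 → Fin r)
    (hφ : ∀ i j, i < j → f (φ i) ∩ f (φ j) = ∅) : HasThreeDisjointNeighbors E := by
  refine ⟨e, he, f ∘ φ, fun i => hf _, fun i hd => ?_, ?_⟩
  · have := hef (φ i)
    rw [Function.comp_apply] at hd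
    simp [disjoint_iff_inter_eq_empty.1 hd] at this
  · refine (Std.Symm.pairwise_on (r := Disjoint) _).2 ?_
    exact fun i j hij => disjoint_iff_inter_eq_empty.2 (hφ i j hij)

lemma HasCrown.hasThreeDisjointNeighbors (hr : 3 ≤ r) (h : HasCrown r E) :
    HasThreeDisjointNeighbors E := by
  obtain ⟨e, he, f, hf, -, hdisj, hef⟩ := h
  exact hasThreeDisjointNeighbors_of_inter he hf hef (Fin.castLE hr) fun i j hij =>
    hdisj _ _ (by simpa using hij.ne)

lemma HasCStar.hasThreeDisjointNeighbors (hr : 3 ≤ r) (h : HasCStar r E) :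
    HasThreeDisjointNeighbors E := by
  obtain ⟨v, e, he, f, hf, -, -, -, hdisj, hef, -⟩ := h
  refine hasThreeDisjointNeighbors_of_inter he hf hef (fun i => (Fin.castLE hr i).rev)
    fun i j hij => hdisj _ _ ?_ ?_
  · simp only [Fin.val_rev, Fin.val_castLE]
    omega
  · simpa using hij.ne

end Forbidden

/-- `q` is the order of some finite projective plane. -/
def IsProjectivePlaneOrder (q : ℕ) : Prop :=
  ∃ (P L : Type) (_ : Membership P L) (_ : Finite P) (_ : Finite L) (_ : ProjectivePlane P L),
    order P L = q

open LinearAlgebra.Projectivization in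
lemma isProjectivePlaneOrder_of_isPrimePow {q : ℕ} (hq : IsPrimePow q) :
    IsProjectivePlaneOrder q := by
  classical
  obtain ⟨p, k, hp, hk, rfl⟩ := (isPrimePow_nat_iff q).1 hq
  have : Fact p.Prime := ⟨hp⟩
  let K := GaloisField p k
  let P := ℙ K (Fin 3 → K)
  have : Finite P := inferInstance
  refine ⟨P, P, inferInstance, inferInstance, inferInstance, inferInstance, ?_⟩
  have := Fintype.ofFinite P
  have hcard := card_points P P
  rw [← Nat.card_eq_fintype_card, Projectivization.card_of_finrank K _ (Module.finrank_fin_fun K),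
    GaloisField.card p k hk.ne'] at hcard
  simp only [sum_range_succ, sum_range_zero, pow_zero, pow_one] at hcard
  rcases lt_trichotomy (order P P) (p ^ k) with hlt | heq | hlt
  · have := Nat.pow_lt_pow_left hlt two_ne_zero
    omega
  · exact heq
  · have := Nat.pow_lt_pow_left hlt two_ne_zero
    omega

lemma IsProjectivePlaneOrder.exists_isLinear [Fintype V] [DecidableEq V] {q : ℕ}
    (hq : IsProjectivePlaneOrder q) {k : ℕ} (hV : q + 1 + k * q ^ 2 ≤ Fintype.card V) :
    ∃ E : Finset (Finset V), IsLinear (q + 1) E ∧ ¬ HasThreeDisjointNeighbors E ∧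
      E.card = k * (q ^ 2 + q) := by
  obtain ⟨P, L, _, _, _, _, rfl⟩ := hq
  have := Fintype.ofFinite P
  have := Fintype.ofFinite L
  obtain ⟨-, -, -, ℓ, -⟩ := ProjectivePlane.exists_config (P := P) (L := L)
  obtain ⟨σ, hσ⟩ := exists_isGluing (ι := Fin k) (V := V) ℓ (by rwa [Fintype.card_fin])
  exact ⟨gluedLines ℓ σ, hσ.isLinear_gluedLines, hσ.not_hasThreeDisjointNeighbors,
    by rw [hσ.card_gluedLines, Fintype.card_fin]⟩

end Gluing

theorem turan_bounds_general {V : Type*} [Fintype V] [DecidableEq V] (r : ℕ) (hr : 3 ≤ r) :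
    (IsProjectivePlaneOrder (r - 1) → ∃ E : Finset (Finset V),
      IsLinear r E ∧ ¬ HasCrown r E ∧ ¬ HasCStar r E ∧
      r * (r - 1) * ((Fintype.card V - r) / (r - 1) ^ 2) ≤ E.card) ∧
    ∀ E : Finset (Finset V), IsLinear r E → ¬ HasCrown r E →
      (E.card : ℝ) ≤ r * (r - 2) * Fintype.card V / (r - 1) := by
  refine ⟨fun hq => ?_, fun E hE hc => by
    simpa only [card_univ] using hE.card_le_of_not_hasCrown hr hc fun e _ => subset_univ e⟩
  rcases lt_or_ge (Fintype.card V) r with hV | hV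
  · refine ⟨∅, by simp [IsLinear], by simp [HasCrown], by simp [HasCStar], ?_⟩
    simp [Nat.sub_eq_zero_of_le hV.le]
  obtain ⟨q, rfl⟩ := Nat.exists_eq_add_of_le' (one_le_two.trans (Nat.le_of_succ_le hr))
  rw [Nat.add_sub_cancel] at hq ⊢
  have hV' := Nat.div_mul_le_self (Fintype.card V - (q + 1)) (q ^ 2)
  obtain ⟨E, hE, h3, hcard⟩ := hq.exists_isLinear (V := V)
    (k := (Fintype.card V - (q + 1)) / q ^ 2) (by omega)
  refine ⟨E, hE, fun h => h3 (h.hasThreeDisjointNeighbors hr),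
    fun h => h3 (h.hasThreeDisjointNeighbors hr), ?_⟩
  rw [hcard]
  exact le_of_eq (by ring)

/-- For `r ≥ 3` with `r - 1` a prime power and all sufficiently large `n`:
`r(r-1)⌊(n-r)/(r-1)^2⌋ ≤ ex_r^{lin}(n, {C_{1r}, C*}) ≤ r(r-2)n/(r-1)`. -/
theorem turan_bounds (r : ℕ) (hr : 3 ≤ r)
    (p k : ℕ) (hp : p.Prime) (hk : 0 < k) (hpp : r - 1 = p ^ k) :
    ∃ N : ℕ, ∀ n : ℕ, N ≤ n →
      (∃ E : Finset (Finset (Fin n)),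
        IsLinear r E ∧ ¬ HasCrown r E ∧ ¬ HasCStar r E ∧
        r * (r - 1) * ((n - r) / (r - 1) ^ 2) ≤ E.card) ∧
      (∀ E : Finset (Finset (Fin n)),
        IsLinear r E → ¬ HasCrown r E → ¬ HasCStar r E →
        (E.card : ℝ) ≤ r * (r - 2) * n / (r - 1)) := by
  refine ⟨0, fun n _ => ?_⟩
  obtain ⟨hlower, hupper⟩ := Fintype.card_fin n ▸ turan_bounds_general (V := Fin n) r hr
  have hq : IsPrimePow (r - 1) := (isPrimePow_nat_iff _).2 ⟨p, k, hp, hk, hpp.symm⟩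
  exact ⟨hlower (isProjectivePlaneOrder_of_isPrimePow hq), fun E hE hc _ => hupper E hE hc⟩
end
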